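/- arXiv:2008.10044 — 2 statements merged into one kernel-verified Lean document; each statement's English description precedes it below -/
import Mathlib

section
/- Let A be an artin algebra with minimal injective cogenerator Q. Assume pd Q = d < ∞ and id(A as a left A-module) = d' < ∞. Then fin-pro A = fin-inj A = Fin-pro A = Fin-inj A = del A = des A = d = d'. -/
open CategoryTheory CategoryTheory.Limits

noncomputable section

namespace ArtinAlg

variable (A : Type) [Ring A]

/-- `M` admits a projective resolution of length at most `n`. -/
inductive ProjDimLE : ℕ → ModuleCat.{0} A → Prop
  | zero (M : ModuleCat.{0} A) (h : Projective M) : ProjDimLE 0 M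
  | succ (n : ℕ) (M P : ModuleCat.{0} A) (f : P ⟶ M) (hP : Projective P) (hf : Epi f)
      (h : ProjDimLE n (kernel f)) : ProjDimLE (n + 1) M

/-- `M` admits an injective coresolution of length at most `n`. -/
inductive InjDimLE : ℕ → ModuleCat.{0} A → Prop
  | zero (M : ModuleCat.{0} A) (h : Injective M) : InjDimLE 0 M
  | succ (n : ℕ) (M I : ModuleCat.{0} A) (f : M ⟶ I) (hI : Injective I) (hf : Mono f)
      (h : InjDimLE n (cokernel f)) : InjDimLE (n + 1) M

/-- The projective dimension `pd M ∈ ℕ∞`. -/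
def projDim (M : ModuleCat.{0} A) : ℕ∞ :=
  sInf {d : ℕ∞ | ∃ n : ℕ, d = n ∧ ProjDimLE A n M}

/-- The injective dimension `id M ∈ ℕ∞`. -/
def injDim (M : ModuleCat.{0} A) : ℕ∞ :=
  sInf {d : ℕ∞ | ∃ n : ℕ, d = n ∧ InjDimLE A n M}

/-- `f : P ⟶ M` is a projective cover: `P` is projective and `f` is an essential
(superfluous) epimorphism. -/
def IsProjectiveCoverHom {P M : ModuleCat.{0} A} (f : P ⟶ M) : Prop :=
  Projective P ∧ Epi f ∧ ∀ (N : ModuleCat.{0} A) (g : N ⟶ P), Epi (g ≫ f) → Epi g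

/-- `P` is a projective cover of `M`. -/
def IsProjCoverOf (M P : ModuleCat.{0} A) : Prop :=
  ∃ f : P ⟶ M, IsProjectiveCoverHom A f

/-- `f : M ⟶ I` is an injective envelope: `I` is injective and `f` is an essential
monomorphism. -/
def IsInjectiveEnvelopeHom {M I : ModuleCat.{0} A} (f : M ⟶ I) : Prop :=
  Injective I ∧ Mono f ∧ ∀ (N : ModuleCat.{0} A) (g : I ⟶ N), Mono (f ≫ g) → Mono g

/-- `I` is an injective envelope of `M`. -/
def IsInjEnvOf (M I : ModuleCat.{0} A) : Prop :=
  ∃ f : M ⟶ I, IsInjectiveEnvelopeHom A f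

/-- `X ≅ Ω M`, the kernel of a projective cover of `M`. -/
def IsSyzygyOf (M X : ModuleCat.{0} A) : Prop :=
  ∃ (P : ModuleCat.{0} A) (f : P ⟶ M), IsProjectiveCoverHom A f ∧ Nonempty (X ≅ kernel f)

/-- `X ≅ Σ M`, the cokernel of an injective envelope of `M`. -/
def IsCosyzygyOf (M X : ModuleCat.{0} A) : Prop :=
  ∃ (I : ModuleCat.{0} A) (f : M ⟶ I), IsInjectiveEnvelopeHom A f ∧ Nonempty (X ≅ cokernel f)

/-- `X ≅ Ω^n M`. -/
def IsNthSyzygy : ℕ → ModuleCat.{0} A → ModuleCat.{0} A → Prop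
  | 0, M, X => Nonempty (X ≅ M)
  | n + 1, M, X => ∃ Y, IsSyzygyOf A M Y ∧ IsNthSyzygy n Y X

/-- `X ≅ Σ^n M`. -/
def IsNthCosyzygy : ℕ → ModuleCat.{0} A → ModuleCat.{0} A → Prop
  | 0, M, X => Nonempty (X ≅ M)
  | n + 1, M, X => ∃ Y, IsCosyzygyOf A M Y ∧ IsNthCosyzygy n Y X

/-- `X` is a direct summand of `Y`. -/
def IsDirectSummandOf (X Y : ModuleCat.{0} A) : Prop :=
  ∃ (i : X ⟶ Y) (r : Y ⟶ X), i ≫ r = 𝟙 X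

/-- `X ∈ add W` : `X` is a direct summand of a finite direct sum of copies of `W`. -/
def InAdd (X W : ModuleCat.{0} A) : Prop :=
  ∃ n : ℕ, IsDirectSummandOf A X (ModuleCat.of A (Fin n → ↥W))

/-- The delooping level of `M` is at most `d` :
`Ω^d M ∈ add (A ⊕ Ω^{d+1} M')` for some finitely generated `M'`. -/
def DelLE (d : ℕ) (M : ModuleCat.{0} A) : Prop :=
  ∃ X, IsNthSyzygy A d M X ∧
    ∃ M' : ModuleCat.{0} A, Module.Finite A ↥M' ∧
      ∃ X', IsNthSyzygy A (d + 1) M' X' ∧ InAdd A X (ModuleCat.of A (A × ↥X'))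

/-- The delooping level `del M ∈ ℕ∞`. -/
def delLevel (M : ModuleCat.{0} A) : ℕ∞ :=
  sInf {d : ℕ∞ | ∃ n : ℕ, d = n ∧ DelLE A n M}

/-- The delooping level of the algebra: the supremum of `del S` over the simple modules. -/
def delAlg : ℕ∞ :=
  sSup {d : ℕ∞ | ∃ S : ModuleCat.{0} A, IsSimpleModule A ↥S ∧ delLevel A S = d}

/-- `Q` is a minimal injective cogenerator: the injective envelope of the direct sum of
a complete set of representatives of the simple modules. -/
def IsMinimalInjectiveCogenerator (Q : ModuleCat.{0} A) : Prop :=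
  ∃ (ι : Type) (_ : Fintype ι) (S : ι → ModuleCat.{0} A),
    (∀ i, IsSimpleModule A ↥(S i)) ∧
    (∀ T : ModuleCat.{0} A, IsSimpleModule A ↥T → ∃! i, Nonempty (↥T ≃ₗ[A] ↥(S i))) ∧
    IsInjEnvOf A (ModuleCat.of A (∀ i, ↥(S i))) Q

/-- The desuspending level of `M` is at most `d` :
`Σ^d M ∈ add (D(A) ⊕ Σ^{d+1} M')` for some finitely generated `M'`. -/
def DesLE (d : ℕ) (M : ModuleCat.{0} A) : Prop :=
  ∃ X, IsNthCosyzygy A d M X ∧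
    ∃ Q, IsMinimalInjectiveCogenerator A Q ∧
      ∃ M' : ModuleCat.{0} A, Module.Finite A ↥M' ∧
        ∃ X', IsNthCosyzygy A (d + 1) M' X' ∧ InAdd A X (ModuleCat.of A (↥Q × ↥X'))

/-- The desuspending level `des M ∈ ℕ∞`. -/
def desLevel (M : ModuleCat.{0} A) : ℕ∞ :=
  sInf {d : ℕ∞ | ∃ n : ℕ, d = n ∧ DesLE A n M}

/-- The desuspending level of the algebra. -/
def desAlg : ℕ∞ :=
  sSup {d : ℕ∞ | ∃ S : ModuleCat.{0} A, IsSimpleModule A ↥S ∧ desLevel A S = d}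

/-- The (small) finitistic projective dimension `fin-pro A`. -/
def finProDim : ℕ∞ :=
  sSup {d : ℕ∞ | ∃ M : ModuleCat.{0} A, Module.Finite A ↥M ∧ projDim A M = d ∧ d ≠ ⊤}

/-- The (small) finitistic injective dimension `fin-inj A`. -/
def finInjDim : ℕ∞ :=
  sSup {d : ℕ∞ | ∃ M : ModuleCat.{0} A, Module.Finite A ↥M ∧ injDim A M = d ∧ d ≠ ⊤}

/-- The big finitistic projective dimension `Fin-pro A`. -/
def bigFinProDim : ℕ∞ :=
  sSup {d : ℕ∞ | ∃ M : ModuleCat.{0} A, projDim A M = d ∧ d ≠ ⊤}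

/-- The big finitistic injective dimension `Fin-inj A`. -/
def bigFinInjDim : ℕ∞ :=
  sSup {d : ℕ∞ | ∃ M : ModuleCat.{0} A, injDim A M = d ∧ d ≠ ⊤}

/-- `M` is an indecomposable nonzero module. -/
def Indec (M : ModuleCat.{0} A) : Prop :=
  Nontrivial ↥M ∧ ∀ (N₁ N₂ : Submodule A ↥M), IsCompl N₁ N₂ → N₁ = ⊥ ∨ N₂ = ⊥

/-- `M` is serial (uniserial): its submodules form a chain. -/
def IsUniserial (M : ModuleCat.{0} A) : Prop :=
  ∀ N₁ N₂ : Submodule A ↥M, N₁ ≤ N₂ ∨ N₂ ≤ N₁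

/-- `A` is a Nakayama algebra: all finitely generated indecomposable modules are serial. -/
def IsNakayama : Prop :=
  ∀ M : ModuleCat.{0} A, Module.Finite A ↥M → Indec A M → IsUniserial A M

/-- `A` is connected: it is not a nontrivial product of algebras. -/
def IsConnectedAlgebra : Prop :=
  Nontrivial A ∧ ∀ e : A, IsIdempotentElem e → e ∈ Set.center A → e = 0 ∨ e = 1

/-- `A` is a cyclic Nakayama algebra: connected Nakayama with no simple projective module. -/
def IsCyclicNakayama : Prop :=
  IsNakayama A ∧ IsConnectedAlgebra A ∧
    ¬ ∃ S : ModuleCat.{0} A, IsSimpleModule A ↥S ∧ Projective S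

/-- `T ≅ top M` (and `top M` is simple): there is an essential epimorphism `M ⟶ T`. -/
def IsSimpleTopOf (M T : ModuleCat.{0} A) : Prop :=
  IsSimpleModule A ↥T ∧
    ∃ f : M ⟶ T, Epi f ∧ ∀ (N : ModuleCat.{0} A) (g : N ⟶ M), Epi (g ≫ f) → Epi g

/-- `S ≅ soc M` (and `soc M` is simple): there is an essential monomorphism `S ⟶ M`. -/
def IsSimpleSocOf (M S : ModuleCat.{0} A) : Prop :=
  IsSimpleModule A ↥S ∧
    ∃ f : S ⟶ M, Mono f ∧ ∀ (N : ModuleCat.{0} A) (g : M ⟶ N), Mono (f ≫ g) → Mono g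

/-- `0 ⟶ N ⟶ E ⟶ M ⟶ 0` is an almost split (Auslander-Reiten) sequence. -/
def IsAlmostSplitSeq {N E M : ModuleCat.{0} A} (f : N ⟶ E) (g : E ⟶ M) : Prop :=
  Mono f ∧ Epi g ∧ (∃ w : f ≫ g = 0, (ShortComplex.mk f g w).Exact) ∧
  (¬ ∃ s : M ⟶ E, s ≫ g = 𝟙 M) ∧ Indec A N ∧ Indec A M ∧
  ∀ (X : ModuleCat.{0} A) (h : X ⟶ M), (¬ ∃ s : M ⟶ X, s ≫ h = 𝟙 M) → ∃ h' : X ⟶ E, h' ≫ g = h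

/-- `N ≅ τ M`, the Auslander-Reiten translate of `M` : there is an almost split sequence
`0 ⟶ N ⟶ E ⟶ M ⟶ 0`. -/
def IsTauOf (N M : ModuleCat.{0} A) : Prop :=
  ∃ (E : ModuleCat.{0} A) (f : N ⟶ E) (g : E ⟶ M), IsAlmostSplitSeq A f g

/-- `U ≅ ψ S = τ⁻ top (I S)`. -/
def IsPsiOf (S U : ModuleCat.{0} A) : Prop :=
  ∃ I, IsInjEnvOf A S I ∧ ∃ T, IsSimpleTopOf A I T ∧ IsTauOf A T U

/-- `T ≅ γ S = τ soc (P S)`. -/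
def IsGammaOf (S T : ModuleCat.{0} A) : Prop :=
  ∃ P, IsProjCoverOf A S P ∧ ∃ U, IsSimpleSocOf A P U ∧ IsTauOf A T U

/-- `T ≅ φ S = top (I S)`. -/
def IsPhiOf (S T : ModuleCat.{0} A) : Prop :=
  ∃ I, IsInjEnvOf A S I ∧ IsSimpleTopOf A I T

/-- There is a `ψ`-path `(S_1, …, S_m)` of cardinality `m` ending in `S`. -/
def PsiPathTo (m : ℕ) (S : ModuleCat.{0} A) : Prop :=
  1 ≤ m ∧ ∃ c : ℕ → ModuleCat.{0} A,
    (∀ i < m, IsSimpleModule A ↥(c i)) ∧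
    (∀ i, i + 1 < m → IsPsiOf A (c i) (c (i + 1))) ∧
    Nonempty (c (m - 1) ≅ S)

/-- `a(S)`: the supremum of the cardinalities of `ψ`-paths ending in `S`. -/
def aVal (S : ModuleCat.{0} A) : ℕ∞ :=
  sSup {d : ℕ∞ | ∃ m : ℕ, d = m ∧ PsiPathTo A m S}

/-- `a(A)`: the maximum of `a(S)` over the simple modules which are not `ψ`-cyclic. -/
def aAlg : ℕ∞ :=
  sSup {d : ℕ∞ | ∃ S : ModuleCat.{0} A, IsSimpleModule A ↥S ∧ aVal A S ≠ ⊤ ∧ aVal A S = d}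

/-- `S` is a composition factor of `M`: a simple subquotient of `M`. -/
def IsCompFactorOf (S M : ModuleCat.{0} A) : Prop :=
  IsSimpleModule A ↥S ∧ ∃ N' N : Submodule A ↥M, N' ≤ N ∧
    Nonempty ((↥N ⧸ N'.comap N.subtype) ≃ₗ[A] ↥S)

/-- `e(S) = min {pd S, pd (I S)} = x`. -/
def ERelVal (S : ModuleCat.{0} A) (x : ℕ∞) : Prop :=
  ∃ I, IsInjEnvOf A S I ∧ x = min (projDim A S) (projDim A I)

/-- `e*(S) = min {id S, id (P S)} = x`. -/
def EStarVal (S : ModuleCat.{0} A) (x : ℕ∞) : Prop :=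
  ∃ P, IsProjCoverOf A S P ∧ x = min (injDim A S) (injDim A P)

/-- `T = h(S) = top (Ω^{e(S)} N S)`, the homological permutation. -/
def HRel (S T : ModuleCat.{0} A) : Prop :=
  IsSimpleModule A ↥S ∧ IsSimpleModule A ↥T ∧
  ∃ z : ℕ, ERelVal A S z ∧
    ∃ N, ((Odd z ∧ N = S) ∨ (Even z ∧ IsInjEnvOf A S N)) ∧
      ∃ X, IsNthSyzygy A z N X ∧ IsSimpleTopOf A X T

/-- `S = h*(T) = soc (Σ^{e*(T)} N* T)`, the inverse homological permutation. -/
def HStarRel (T S : ModuleCat.{0} A) : Prop :=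
  IsSimpleModule A ↥T ∧ IsSimpleModule A ↥S ∧
  ∃ z : ℕ, EStarVal A T z ∧
    ∃ N, ((Odd z ∧ N = T) ∨ (Even z ∧ IsProjCoverOf A T N)) ∧
      ∃ X, IsNthCosyzygy A z N X ∧ IsSimpleSocOf A X S

/-- The `t`-fold relational iterate of a relation on modules (up to isomorphism). -/
def IterRel (r : ModuleCat.{0} A → ModuleCat.{0} A → Prop) :
    ℕ → ModuleCat.{0} A → ModuleCat.{0} A → Prop
  | 0, X, Y => Nonempty (X ≅ Y)
  | n + 1, X, Y => ∃ Z, r X Z ∧ IterRel r n Z Y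

end ArtinAlg

/-!
All the invariants are squeezed in the cycle
`pd Q ≤ fin-pro A ≤ Fin-pro A ≤ des A ≤ id A ≤ fin-inj A ≤ Fin-inj A ≤ del A ≤ pd Q`.

For `Fin-inj A ≤ del A`, let `id M ≤ n + 1`. If a simple module `S` has `del S = m ≤ n`, then
`Ext^{n+1}(S, M) = Ext^{n+1-m}(Ω^m S, M)` is a summand of a power of
`Ext^{n+1-m}(A ⊕ Ω^{m+1} M', M) = Ext^{n+2}(M', M) = 0`.
If this happens for every `S`, then `id M ≤ n`.

For `del A ≤ pd Q = d`, embed a simple module `S` in `Q`. Comparing projective resolutions along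
`0 ⟶ S ⟶ Q ⟶ Q / S ⟶ 0` shows that `Ω^d S` is stably a direct summand of `Ω^{d+1} (Q / S)`.

The inequalities for `des A` are dual, with `A ⟶ S` in place of `S ⟶ Q`.
-/

namespace ArtinAlg

section ENat

lemma sInf_natCast_le_iff {p : ℕ → Prop} {n : ℕ} :
    sInf {d : ℕ∞ | ∃ m : ℕ, d = m ∧ p m} ≤ n ↔ ∃ m ≤ n, p m := by
  refine ⟨fun h => ?_, fun ⟨m, hm, hp⟩ =>
    sInf_le_of_le ⟨m, rfl, hp⟩ (Nat.cast_le.2 hm)⟩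
  obtain ⟨_, ⟨m, rfl, hp⟩, hm⟩ := sInf_lt_iff.1 (h.trans_lt (Nat.cast_lt.2 n.lt_succ_self))
  exact ⟨m, Nat.lt_succ_iff.1 (Nat.cast_lt.1 hm), hp⟩

lemma enat_le_of_forall_natCast_le_imp {x y : ℕ∞} (hx : x ≠ ⊤)
    (h : ∀ n : ℕ, y ≤ n → x ≤ (n + 1 : ℕ) → x ≤ n) : x ≤ y := by
  by_contra! hyx
  obtain ⟨m, rfl⟩ := ENat.ne_top_iff_exists.1 hx
  obtain ⟨n, rfl⟩ := ENat.ne_top_iff_exists.1 hyx.ne_top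
  obtain ⟨k, rfl⟩ := Nat.exists_eq_add_of_lt (Nat.cast_lt.1 hyx)
  have := Nat.cast_le.1 (h (n + k) (Nat.cast_le.2 (by lia)) le_rfl)
  lia

end ENat

section ShortExact

variable {C : Type*} [Category* C] [Abelian C]

lemma shortExact_kernel {X Y : C} (f : X ⟶ Y) [Epi f] :
    (ShortComplex.mk (kernel.ι f) f (kernel.condition f)).ShortExact :=
  { exact := ShortComplex.exact_kernel f }

lemma shortExact_cokernel {X Y : C} (f : X ⟶ Y) [Mono f] :
    (ShortComplex.mk f (cokernel.π f) (cokernel.condition f)).ShortExact :=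
  { exact := ShortComplex.exact_cokernel f }

lemma shortExact_kernel_of_epi_τ₁ {S T : ShortComplex C} (hS : S.ShortExact) (hT : T.ShortExact)
    (v : S ⟶ T) [Epi v.τ₁] : (kernel v).ShortExact := by
  have := hS.epi_g
  have := hS.mono_f
  have := hT.mono_f
  let D : ShortComplex.SnakeInput C :=
    { L₀ := kernel v
      L₁ := S
      L₂ := T
      L₃ := cokernel v
      v₀₁ := kernel.ι v
      v₁₂ := v
      v₂₃ := cokernel.π v
      w₀₂ := kernel.condition v
      w₁₃ := cokernel.condition v
      h₀ := kernelIsKernel v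
      h₃ := cokernelIsCokernel v
      L₁_exact := hS.exact
      epi_L₁_g := hS.epi_g
      L₂_exact := hT.exact
      mono_L₂_f := hT.mono_f }
  have cokernel_eq_zero : IsZero D.L₃.X₁ := by
    have h : D.v₂₃.τ₁ = 0 := by
      rw [← cancel_epi v.τ₁, comp_zero]
      exact D.w₁₃_τ₁
    have : Epi D.v₂₃.τ₁ := D.epi_v₂₃_τ₁
    exact IsZero.of_epi_eq_zero _ h
  have : Mono D.L₁.f := hS.mono_f
  exact
    { exact := D.L₀_exact
      mono_f := D.mono_L₀_f
      epi_g := D.L₁'_exact.epi_f (cokernel_eq_zero.eq_of_tgt _ _) }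

lemma exists_horseshoe {S : ShortComplex C} (hS : S.ShortExact) {P P' : C} [Projective P']
    (p : P ⟶ S.X₁) (p' : P' ⟶ S.X₃) [Epi p] [Epi p'] :
    ∃ (q : P ⊞ P' ⟶ S.X₂) (T : ShortComplex C), Epi q ∧ T.ShortExact ∧
      Nonempty (T.X₁ ≅ kernel p) ∧ Nonempty (T.X₂ ≅ kernel q) ∧ Nonempty (T.X₃ ≅ kernel p') := by
  have := hS.epi_g
  obtain ⟨l, hl⟩ : ∃ l : P' ⟶ S.X₂, l ≫ S.g = p' := ⟨_, Projective.factorThru_comp p' S.g⟩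
  let M : ShortComplex C := ShortComplex.mk (biprod.inl : P ⟶ P ⊞ P') biprod.snd (by simp)
  have hM : M.ShortExact := (ShortComplex.Splitting.ofHasBinaryBiproduct P P').shortExact
  let v : M ⟶ S :=
    { τ₁ := p
      τ₂ := biprod.desc (p ≫ S.f) l
      τ₃ := p'
      comm₁₂ := by simp [M]
      comm₂₃ := by dsimp [M]; ext <;> simp [hl] }
  have : Epi v.τ₁ := ‹Epi p›
  exact ⟨v.τ₂, kernel v,
    ShortComplex.epi_of_epi_of_epi_of_epi v hS.exact hM.epi_g ‹Epi p› ‹Epi p'›,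
    shortExact_kernel_of_epi_τ₁ hM hS v, ⟨PreservesKernel.iso ShortComplex.π₁ v⟩,
    ⟨PreservesKernel.iso ShortComplex.π₂ v⟩, ⟨PreservesKernel.iso ShortComplex.π₃ v⟩⟩

lemma hasProjectiveDimensionLE_op [EnoughInjectives C] {n : ℕ} {M : C}
    (h : HasInjectiveDimensionLE M n) :
    HasProjectiveDimensionLE (Opposite.op M) n := by
  induction n generalizing M with
  | zero =>
    have : Injective M := injective_iff_hasInjectiveDimensionLT_one.2 h
    exact projective_iff_hasProjectiveDimensionLT_one.1 (inferInstance : Projective (Opposite.op M))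
  | succ n ih =>
    have hS := shortExact_cokernel (Injective.ι M)
    exact (hS.op.hasProjectiveDimensionLT_X₃_iff n
      (inferInstance : Projective (Opposite.op (Injective.under M)))).2
      (ih ((hS.hasInjectiveDimensionLT_X₃_iff n (Injective.injective_under M)).2 h))

end ShortExact

section StableRetract

variable {C : Type*} [Category* C] [Abelian C]

/-- `X` is a retract of `Y` in the stable category of `C` modulo projectives: the identity of `X`
is the sum of an endomorphism factoring through `Y` and one factoring through a projective. -/
def IsStableRetract (X Y : C) : Prop :=
  ∃ (P : C) (_ : Projective P) (a : X ⟶ Y) (r : Y ⟶ X) (s : X ⟶ P) (t : P ⟶ X),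
    a ≫ r + s ≫ t = 𝟙 X

/-- `X` is an `n`-th syzygy of `M` computed from an arbitrary projective resolution, not necessarily
a minimal one. -/
def IsNonminimalSyzygy : ℕ → C → C → Prop
  | 0, M, X => Nonempty (X ≅ M)
  | n + 1, M, X => ∃ (P : C) (p : P ⟶ M),
      Projective P ∧ Epi p ∧ IsNonminimalSyzygy n (kernel p) X

lemma IsStableRetract.of_iso {X Y X' Y' : C} (h : IsStableRetract X Y) (e : X ≅ X')
    (e' : Y ≅ Y') : IsStableRetract X' Y' := by
  obtain ⟨P, hP, a, r, s, t, h⟩ := h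
  refine ⟨P, hP, e.inv ≫ a ≫ e'.hom, e'.inv ≫ r ≫ e.hom, e.inv ≫ s, t ≫ e.hom, ?_⟩
  have : e.inv ≫ (a ≫ r + s ≫ t) ≫ e.hom = 𝟙 _ := by rw [h]; simp
  simpa using this

lemma IsStableRetract.kernel {X Y P P' : C} [Projective P] [Projective P'] (p : P ⟶ X)
    (p' : P' ⟶ Y) [Epi p] [Epi p'] (h : IsStableRetract X Y) :
    IsStableRetract (kernel p) (kernel p') := by
  obtain ⟨P'', _, a, r, s, t, h⟩ := h
  obtain ⟨t', ht⟩ : ∃ t' : P'' ⟶ P, t' ≫ p = t := ⟨_, Projective.factorThru_comp t p⟩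
  obtain ⟨α, hα⟩ : ∃ α : P ⟶ P', α ≫ p' = p ≫ a := ⟨_, Projective.factorThru_comp (p ≫ a) p'⟩
  obtain ⟨β, hβ⟩ : ∃ β : P' ⟶ P, β ≫ p = p' ≫ r := ⟨_, Projective.factorThru_comp (p' ≫ r) p⟩
  have hp : (𝟙 P - α ≫ β - p ≫ s ≫ t') ≫ p = 0 := by
    simp only [Preadditive.sub_comp, Category.assoc, hβ, reassoc_of% hα, ht, Category.id_comp]
    rw [sub_sub, ← Preadditive.comp_add, h, Category.comp_id, sub_self]
  refine ⟨P, ‹_›, kernel.map p p' α a hα.symm, kernel.map p' p β r hβ.symm, kernel.ι p,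
    kernel.lift p _ hp, ?_⟩
  rw [← cancel_mono (kernel.ι p)]
  simp [Preadditive.comp_sub]

lemma IsNonminimalSyzygy.of_iso {n : ℕ} {M M' X X' : C} (h : IsNonminimalSyzygy n M X)
    (e : M ≅ M') (e' : X ≅ X') : IsNonminimalSyzygy n M' X' := by
  induction n generalizing M M' with
  | zero => exact ⟨e'.symm ≪≫ h.some ≪≫ e⟩
  | succ n ih =>
    obtain ⟨P, p, hP, hp, h⟩ := h
    exact ⟨P, p ≫ e.hom, hP, inferInstance, ih h (kernelCompMono p e.hom).symm⟩

/-- The horseshoe lemma yields a short exact sequence of syzygies, whose middle term has smaller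
projective dimension; when the latter is zero, the first term is a syzygy of the last one. -/
lemma isStableRetract_of_shortExact {n : ℕ} {S : ShortComplex C} (hS : S.ShortExact)
    (hpd : HasProjectiveDimensionLE S.X₂ n) {X X' : C} (hX : IsNonminimalSyzygy n S.X₁ X)
    (hX' : IsNonminimalSyzygy (n + 1) S.X₃ X') : IsStableRetract X X' := by
  induction n generalizing S X X' with
  | zero =>
    obtain ⟨P, p, hP, hp, ⟨e⟩⟩ := hX'
    have : Projective S.X₂ := (projective_iff_hasProjectiveDimensionLE_zero _).2 hpd
    have := hS.epi_g
    have refl : IsStableRetract S.X₃ S.X₃ := ⟨P, hP, 𝟙 _, 𝟙 _, 0, 0, by simp⟩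
    exact (refl.kernel S.g p).of_iso
      ((limit.isLimit _).conePointUniqueUpToIso hS.fIsKernel ≪≫ hX.some.symm) e.symm
  | succ n ih =>
    obtain ⟨P, p, hP, hp, hX⟩ := hX
    obtain ⟨P', p', hP', hp', hX'⟩ := hX'
    obtain ⟨q, T, hq, hT, ⟨e₁⟩, ⟨e₂⟩, ⟨e₃⟩⟩ := exists_horseshoe hS p p'
    have hker : HasProjectiveDimensionLE (kernel q) n :=
      (shortExact_kernel q).hasProjectiveDimensionLT_X₁ (n + 1)
        (by dsimp; infer_instance) hpd
    exact ih hT (hasProjectiveDimensionLT_of_iso e₂.symm _) (hX.of_iso e₁.symm (Iso.refl _))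
      (hX'.of_iso e₃.symm (Iso.refl _))

end StableRetract

section ExtVanishing

open Abelian

universe w v u

variable {C : Type u} [Category.{v} C] [Abelian C] [HasExt.{w} C] {S : ShortComplex C} {n : ℕ}

lemma subsingleton_ext_X₁_left (hS : S.ShortExact) {Y : C} (h₂ : Subsingleton (Ext.{w} S.X₂ Y n))
    (h₃ : Subsingleton (Ext.{w} S.X₃ Y (n + 1))) : Subsingleton (Ext.{w} S.X₁ Y n) := by
  refine subsingleton_of_forall_eq 0 fun e => ?_
  obtain ⟨x, rfl⟩ := Ext.contravariant_sequence_exact₁ hS Y e (add_comm 1 n)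
    (Subsingleton.elim _ _)
  rw [Subsingleton.elim x 0, Ext.comp_zero]

lemma subsingleton_ext_X₂_left (hS : S.ShortExact) {Y : C} (h₁ : Subsingleton (Ext.{w} S.X₁ Y n))
    (h₃ : Subsingleton (Ext.{w} S.X₃ Y n)) : Subsingleton (Ext.{w} S.X₂ Y n) := by
  refine subsingleton_of_forall_eq 0 fun e => ?_
  obtain ⟨x, rfl⟩ := Ext.contravariant_sequence_exact₂ hS Y e (Subsingleton.elim _ _)
  rw [Subsingleton.elim x 0, Ext.comp_zero]

lemma subsingleton_ext_X₃_left (hS : S.ShortExact) {Y : C} (h₁ : Subsingleton (Ext.{w} S.X₁ Y n))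
    (h₂ : Subsingleton (Ext.{w} S.X₂ Y (n + 1))) : Subsingleton (Ext.{w} S.X₃ Y (n + 1)) := by
  refine subsingleton_of_forall_eq 0 fun e => ?_
  obtain ⟨x, rfl⟩ := Ext.contravariant_sequence_exact₃ hS Y e (Subsingleton.elim _ _)
    (add_comm 1 n)
  rw [Subsingleton.elim x 0, Ext.comp_zero]

lemma subsingleton_ext_X₁_right (hS : S.ShortExact) {X : C} (h₃ : Subsingleton (Ext.{w} X S.X₃ n))
    (h₂ : Subsingleton (Ext.{w} X S.X₂ (n + 1))) : Subsingleton (Ext.{w} X S.X₁ (n + 1)) := by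
  refine subsingleton_of_forall_eq 0 fun e => ?_
  obtain ⟨x, rfl⟩ := Ext.covariant_sequence_exact₁ X hS e (Subsingleton.elim _ _) rfl
  rw [Subsingleton.elim x 0, Ext.zero_comp]

lemma subsingleton_ext_X₂_right (hS : S.ShortExact) {X : C} (h₁ : Subsingleton (Ext.{w} X S.X₁ n))
    (h₃ : Subsingleton (Ext.{w} X S.X₃ n)) : Subsingleton (Ext.{w} X S.X₂ n) := by
  refine subsingleton_of_forall_eq 0 fun e => ?_
  obtain ⟨x, rfl⟩ := Ext.covariant_sequence_exact₂ X hS e (Subsingleton.elim _ _)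
  rw [Subsingleton.elim x 0, Ext.zero_comp]

lemma subsingleton_ext_X₃_right (hS : S.ShortExact) {X : C} (h₂ : Subsingleton (Ext.{w} X S.X₂ n))
    (h₁ : Subsingleton (Ext.{w} X S.X₁ (n + 1))) : Subsingleton (Ext.{w} X S.X₃ n) := by
  refine subsingleton_of_forall_eq 0 fun e => ?_
  obtain ⟨x, rfl⟩ := Ext.covariant_sequence_exact₃ X hS e rfl (Subsingleton.elim _ _)
  rw [Subsingleton.elim x 0, Ext.zero_comp]

lemma subsingleton_ext_X₃_left_iff (hS : S.ShortExact) [Projective S.X₂] {Y : C} :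
    Subsingleton (Ext.{w} S.X₃ Y (n + 2)) ↔ Subsingleton (Ext.{w} S.X₁ Y (n + 1)) :=
  ⟨subsingleton_ext_X₁_left hS (Ext.subsingleton_of_projective _ _ _),
    fun h => subsingleton_ext_X₃_left hS h (Ext.subsingleton_of_projective _ _ _)⟩

lemma subsingleton_ext_X₁_right_iff (hS : S.ShortExact) [Injective S.X₂] {X : C} :
    Subsingleton (Ext.{w} X S.X₁ (n + 2)) ↔ Subsingleton (Ext.{w} X S.X₃ (n + 1)) :=
  ⟨subsingleton_ext_X₃_right hS (Ext.subsingleton_of_injective _ _ _),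
    fun h => subsingleton_ext_X₁_right hS h (Ext.subsingleton_of_injective _ _ _)⟩

lemma subsingleton_ext_one_iff (hS : S.ShortExact) [Projective S.X₂] {Y : C} :
    Subsingleton (Ext.{w} S.X₃ Y 1) ↔ ∀ f : S.X₁ ⟶ Y, ∃ g : S.X₂ ⟶ Y, S.f ≫ g = f := by
  refine ⟨fun h f => ?_, fun h => subsingleton_of_forall_eq 0 fun e => ?_⟩
  · obtain ⟨x, hx⟩ := Ext.contravariant_sequence_exact₁ hS Y (Ext.mk₀ f) (add_zero 1)
      (Subsingleton.elim _ _)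
    obtain ⟨g, rfl⟩ := Ext.mk₀_bijective _ _ |>.2 x
    refine ⟨g, (Ext.mk₀_bijective _ _).1 ?_⟩
    rw [← hx, Ext.mk₀_comp_mk₀]
  · obtain ⟨x, rfl⟩ := Ext.contravariant_sequence_exact₃ hS Y e (Ext.eq_zero_of_projective _)
      (add_zero 1)
    obtain ⟨f, rfl⟩ := Ext.mk₀_bijective _ _ |>.2 x
    obtain ⟨g, rfl⟩ := h f
    rw [← Ext.mk₀_comp_mk₀, hS.extClass_comp_assoc]

lemma subsingleton_ext_of_retract_left {X X' Y : C} (h : Retract X X')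
    (hX' : Subsingleton (Ext.{w} X' Y n)) : Subsingleton (Ext.{w} X Y n) := by
  refine subsingleton_of_forall_eq 0 fun e => ?_
  rw [← Ext.mk₀_id_comp e, ← h.retract, ← Ext.mk₀_comp_mk₀, Ext.comp_assoc_of_second_deg_zero,
    hX'.elim (Ext.comp _ _ _) 0, Ext.comp_zero]

lemma subsingleton_ext_of_retract_right {X Y Y' : C} (h : Retract Y Y')
    (hY' : Subsingleton (Ext.{w} X Y' n)) : Subsingleton (Ext.{w} X Y n) := by
  refine subsingleton_of_forall_eq 0 fun e => ?_
  rw [← Ext.comp_mk₀_id e, ← h.retract, ← Ext.mk₀_comp_mk₀, ← Ext.comp_assoc_of_third_deg_zero,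
    hY'.elim (Ext.comp _ _ _) 0, Ext.zero_comp]

lemma subsingleton_ext_biprod_left {X X' Y : C} (hX : Subsingleton (Ext.{w} X Y n))
    (hX' : Subsingleton (Ext.{w} X' Y n)) : Subsingleton (Ext.{w} (X ⊞ X') Y n) :=
  subsingleton_ext_X₂_left (ShortComplex.Splitting.ofHasBinaryBiproduct X X').shortExact hX hX'

lemma subsingleton_ext_biprod_right {X Y Y' : C} (hY : Subsingleton (Ext.{w} X Y n))
    (hY' : Subsingleton (Ext.{w} X Y' n)) : Subsingleton (Ext.{w} X (Y ⊞ Y') n) :=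
  subsingleton_ext_X₂_right (ShortComplex.Splitting.ofHasBinaryBiproduct Y Y').shortExact hY hY'

lemma subsingleton_ext_pi_right [EnoughProjectives C] {ι : Type*} {N : ι → C} [HasProduct N]
    {M : C} (h : ∀ i, Subsingleton (Ext.{w} M (N i) (n + 1))) :
    Subsingleton (Ext.{w} M (∏ᶜ N) (n + 1)) := by
  have hS := shortExact_kernel (Projective.π M)
  induction n generalizing M with
  | zero =>
    refine (subsingleton_ext_one_iff hS).2 fun f => ?_
    choose g hg using fun i => (subsingleton_ext_one_iff hS).1 (h i) (f ≫ Pi.π N i)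
    exact ⟨Pi.lift g, Pi.hom_ext _ _ fun i => by simpa using hg i⟩
  | succ n ih =>
    exact (subsingleton_ext_X₃_left_iff hS).2
      (ih (fun i => (subsingleton_ext_X₃_left_iff hS).1 (h i))
        (shortExact_kernel _))

end ExtVanishing

section Dimension

variable {A : Type} [Ring A] {n : ℕ} {M : ModuleCat.{0} A}

lemma projDimLE_iff : ProjDimLE A n M ↔ HasProjectiveDimensionLE M n := by
  induction n generalizing M with
  | zero =>
    rw [← projective_iff_hasProjectiveDimensionLE_zero]
    exact ⟨fun h => by cases h; assumption, ProjDimLE.zero M⟩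
  | succ n ih =>
    refine ⟨fun h => ?_, fun h => .succ n M _ (Projective.π M) (Projective.projective_over M)
      (Projective.π_epi M)
      (ih.2 (((shortExact_kernel (Projective.π M)).hasProjectiveDimensionLT_X₃_iff n
        (Projective.projective_over M)).1 h))⟩
    cases h with
    | succ _ _ P f hP hf h =>
      exact ((shortExact_kernel f).hasProjectiveDimensionLT_X₃_iff n hP).2 (ih.1 h)

lemma injDimLE_iff : InjDimLE A n M ↔ HasInjectiveDimensionLE M n := by
  induction n generalizing M with
  | zero =>
    rw [HasInjectiveDimensionLE, ← injective_iff_hasInjectiveDimensionLT_one]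
    exact ⟨fun h => by cases h; assumption, InjDimLE.zero M⟩
  | succ n ih =>
    refine ⟨fun h => ?_, fun h => .succ n M _ (Injective.ι M) (Injective.injective_under M)
      (Injective.ι_mono M)
      (ih.2 (((shortExact_cokernel (Injective.ι M)).hasInjectiveDimensionLT_X₃_iff n
        (Injective.injective_under M)).2 h))⟩
    cases h with
    | succ _ _ I f hI hf h =>
      exact ((shortExact_cokernel f).hasInjectiveDimensionLT_X₃_iff n hI).1 (ih.1 h)

lemma projDim_le_iff : projDim A M ≤ n ↔ HasProjectiveDimensionLE M n := by
  simp only [projDim, sInf_natCast_le_iff, projDimLE_iff]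
  exact ⟨fun ⟨m, hm, _⟩ => hasProjectiveDimensionLT_of_ge M (m + 1) (n + 1) (by lia),
    fun h => ⟨n, le_rfl, h⟩⟩

lemma injDim_le_iff : injDim A M ≤ n ↔ HasInjectiveDimensionLE M n := by
  simp only [injDim, sInf_natCast_le_iff, injDimLE_iff]
  exact ⟨fun ⟨m, hm, _⟩ => hasInjectiveDimensionLT_of_ge M (m + 1) (n + 1) (by lia),
    fun h => ⟨n, le_rfl, h⟩⟩

open Abelian

lemma IsNthSyzygy.subsingleton_ext_iff {X N : ModuleCat.{0} A} (h : IsNthSyzygy A n M X) (k : ℕ) :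
    Subsingleton (Ext M N (n + (k + 1))) ↔ Subsingleton (Ext X N (k + 1)) := by
  induction n generalizing M with
  | zero =>
    rw [Nat.zero_add]
    exact ⟨subsingleton_ext_of_retract_left (.ofIso h.some),
      subsingleton_ext_of_retract_left (.ofIso h.some.symm)⟩
  | succ n ih =>
    obtain ⟨Y, ⟨P, f, ⟨hP, hf, -⟩, ⟨e⟩⟩, hY⟩ := h
    rw [← ih hY, show n + 1 + (k + 1) = n + k + 2 by lia,
      subsingleton_ext_X₃_left_iff (shortExact_kernel f)]
    exact ⟨subsingleton_ext_of_retract_left (.ofIso e),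
      subsingleton_ext_of_retract_left (.ofIso e.symm)⟩

lemma IsNthCosyzygy.subsingleton_ext_iff {X N : ModuleCat.{0} A} (h : IsNthCosyzygy A n M X)
    (k : ℕ) : Subsingleton (Ext N M (n + (k + 1))) ↔ Subsingleton (Ext N X (k + 1)) := by
  induction n generalizing M with
  | zero =>
    rw [Nat.zero_add]
    exact ⟨subsingleton_ext_of_retract_right (.ofIso h.some),
      subsingleton_ext_of_retract_right (.ofIso h.some.symm)⟩
  | succ n ih =>
    obtain ⟨Y, ⟨I, f, ⟨hI, hf, -⟩, ⟨e⟩⟩, hY⟩ := h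
    rw [← ih hY, show n + 1 + (k + 1) = n + k + 2 by lia,
      subsingleton_ext_X₁_right_iff (shortExact_cokernel f)]
    exact ⟨subsingleton_ext_of_retract_right (.ofIso e),
      subsingleton_ext_of_retract_right (.ofIso e.symm)⟩

end Dimension

lemma exists_surjective_pi_of_isSemisimpleRing (B N : Type*) [Ring B] [IsSemisimpleRing B]
    [AddCommGroup N] [Module B N] : ∃ f : (N → B) →ₗ[B] N, Function.Surjective f := by
  obtain ⟨f, hf⟩ := IsSemisimpleModule.extension_property
    (Finsupp.lcoeFun : (N →₀ B) →ₗ[B] N → B) DFunLike.coe_injective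
    (Finsupp.linearCombination B id)
  refine ⟨f, .of_comp (g := (Finsupp.lcoeFun : (N →₀ B) →ₗ[B] N → B)) ?_⟩
  rw [← LinearMap.coe_comp, hf]
  exact Finsupp.linearCombination_surjective B Function.surjective_id

/-- A module killed by the radical is a quotient of a power of `A / J`, as `A / J` is semisimple. -/
lemma exists_surjective_pi_of_isTorsionBySet_jacobson {A N : Type*} [Ring A] [IsSemiprimaryRing A]
    [AddCommGroup N] [Module A N] (hN : Module.IsTorsionBySet A N (Ring.jacobson A : Set A)) :
    ∃ f : (N → A) →ₗ[A] N, Function.Surjective f := by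
  let _ := hN.module
  have : IsScalarTower A (A ⧸ Ring.jacobson A) N := hN.isScalarTower
  obtain ⟨f, hf⟩ := exists_surjective_pi_of_isSemisimpleRing (A ⧸ Ring.jacobson A) N
  exact ⟨f.restrictScalars A ∘ₗ (Ring.jacobson A).mkQ.compLeft N,
    hf.comp (Submodule.mkQ_surjective _).comp_left⟩

section Criteria

open Abelian

universe u

variable {A : Type u} [Ring A] {n : ℕ} {M : ModuleCat.{u} A}

lemma shortExact_submodule {Y : Type u} [AddCommGroup Y] [Module A Y] (N : Submodule A Y) :
    (ShortComplex.mk (ModuleCat.ofHom N.subtype) (ModuleCat.ofHom N.mkQ)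
      (by ext x; simp)).ShortExact :=
  ModuleCat.shortComplex_shortExact _ (LinearMap.exact_subtype_mkQ N) N.injective_subtype
    N.mkQ_surjective

lemma shortExact_ker {P N : Type u} [AddCommGroup P] [Module A P] [AddCommGroup N] [Module A N]
    {f : P →ₗ[A] N} (hf : Function.Surjective f) :
    (ShortComplex.mk (ModuleCat.ofHom f.ker.subtype) (ModuleCat.ofHom f)
      (by ext x; simp)).ShortExact :=
  ModuleCat.shortComplex_shortExact _ (LinearMap.exact_subtype_ker_map f)
    f.ker.injective_subtype hf

lemma subsingleton_ext_of_surjective (hM : HasProjectiveDimensionLE M n) {P N : Type u}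
    [AddCommGroup P] [Module A P] [AddCommGroup N] [Module A N] {f : P →ₗ[A] N}
    (hf : Function.Surjective f) (hP : Subsingleton (Ext M (.of A P) n)) :
    Subsingleton (Ext M (.of A N) n) :=
  subsingleton_ext_X₃_right (shortExact_ker hf) hP (hM.subsingleton _ _ _ le_rfl _)

/-- By right exactness, `Ext^{n+1}(M, -)` vanishes on the quotients of powers of `A`, hence on every
module killed by the radical, and then on all modules by devissage along the radical filtration. -/
lemma hasProjectiveDimensionLE_of_subsingleton_ext_self [IsSemiprimaryRing A]
    (hM : HasProjectiveDimensionLE M (n + 1)) (h : Subsingleton (Ext M (.of A A) (n + 1))) :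
    HasProjectiveDimensionLE M n := by
  refine hasProjectiveDimensionLT_of_enoughInjectives M (n + 1) fun N => ?_
  refine IsSemiprimaryRing.induction ℤ A N
    (P := fun N _ _ _ => Subsingleton (Ext M (.of A N) (n + 1))) ?_ ?_
  · intro N _ _ _ _ _ hN
    obtain ⟨f, hf⟩ := exists_surjective_pi_of_isTorsionBySet_jacobson hN
    refine subsingleton_ext_of_surjective hM hf ?_
    exact subsingleton_ext_of_retract_right (.ofIso (ModuleCat.piIsoPi fun _ : N => .of A A).symm)
      (subsingleton_ext_pi_right fun _ => h)
  · intro N _ _ _ _ _ hJ hq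
    exact subsingleton_ext_X₂_right (shortExact_submodule _) hJ hq

lemma subsingleton_ext_of_simple_left [IsArtinianRing A]
    (h : ∀ S : ModuleCat.{u} A, IsSimpleModule A S → Subsingleton (Ext S M n))
    (X : Type u) [AddCommGroup X] [Module A X] [Module.Finite A X] :
    Subsingleton (Ext (.of A X) M n) := by
  have hX : IsFiniteLength A X := ((IsArtinianRing.tfae A X).out 0 3).1 ‹_›
  clear ‹Module.Finite A X›
  induction hX with
  | of_subsingleton =>
    exact (ModuleCat.isZero_of_subsingleton (.of A _)).hasProjectiveDimensionLT_zero.subsingleton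
      _ _ _ n.zero_le _
  | of_simple_quotient _ ih =>
    exact subsingleton_ext_X₂_left (shortExact_submodule _) ih (h _ ‹_›)

lemma subsingleton_ext_of_simple_right [IsArtinianRing A]
    (h : ∀ S : ModuleCat.{u} A, IsSimpleModule A S → Subsingleton (Ext M S n))
    (X : Type u) [AddCommGroup X] [Module A X] [Module.Finite A X] :
    Subsingleton (Ext M (.of A X) n) := by
  have hX : IsFiniteLength A X := ((IsArtinianRing.tfae A X).out 0 3).1 ‹_›
  clear ‹Module.Finite A X›
  induction hX with
  | of_subsingleton =>
    exact (ModuleCat.isZero_of_subsingleton (.of A _)).hasInjectiveDimensionLT_zero.subsingleton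
      _ _ _ n.zero_le _
  | of_simple_quotient _ ih =>
    exact subsingleton_ext_X₂_right (shortExact_submodule _) ih (h _ ‹_›)

lemma hasInjectiveDimensionLE_of_subsingleton_ext_quotient
    (h : ∀ I : Ideal A, Subsingleton (Ext (.of A (A ⧸ I)) M (n + 1))) :
    HasInjectiveDimensionLE M n := by
  induction n generalizing M with
  | zero =>
    rw [HasInjectiveDimensionLE, ← injective_iff_hasInjectiveDimensionLT_one]
    refine (Module.injective_iff_injective_object A M).1 (Module.Baer.injective fun I g => ?_)
    obtain ⟨f, hf⟩ :=
      (subsingleton_ext_one_iff (shortExact_submodule I)).1 (h I) (ModuleCat.ofHom g)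
    exact ⟨f.hom, fun x hx => LinearMap.congr_fun (congrArg ModuleCat.Hom.hom hf) ⟨x, hx⟩⟩
  | succ n ih =>
    have hS := shortExact_cokernel (Injective.ι M)
    exact (hS.hasInjectiveDimensionLT_X₃_iff n (Injective.injective_under M)).1
      (ih fun I => (subsingleton_ext_X₁_right_iff hS).1 (h I))

lemma hasInjectiveDimensionLE_of_subsingleton_ext_simple [IsArtinianRing A]
    (h : ∀ S : ModuleCat.{u} A, IsSimpleModule A S → Subsingleton (Ext S M (n + 1))) :
    HasInjectiveDimensionLE M n :=
  hasInjectiveDimensionLE_of_subsingleton_ext_quotient fun _ =>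
    subsingleton_ext_of_simple_left h _

lemma hasProjectiveDimensionLE_of_subsingleton_ext_simple [IsArtinianRing A]
    (hM : HasProjectiveDimensionLE M (n + 1))
    (h : ∀ S : ModuleCat.{u} A, IsSimpleModule A S → Subsingleton (Ext M S (n + 1))) :
    HasProjectiveDimensionLE M n :=
  hasProjectiveDimensionLE_of_subsingleton_ext_self hM (subsingleton_ext_of_simple_right h A)

end Criteria

section LowerBounds

open Abelian

variable {A : Type} [Ring A] {n : ℕ} {M N Q : ModuleCat.{0} A}

lemma InAdd.subsingleton_ext_left {X V W Y : ModuleCat.{0} A} (h : InAdd A X (.of A (V × W)))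
    (hV : Subsingleton (Ext V Y n)) (hW : Subsingleton (Ext W Y n)) :
    Subsingleton (Ext X Y n) := by
  obtain ⟨k, i, r, hir⟩ := h
  have hVW : Subsingleton (Ext (.of A (V × W)) Y n) :=
    subsingleton_ext_of_retract_left (.ofIso (ModuleCat.biprodIsoProd V W).symm)
      (subsingleton_ext_biprod_left hV hW)
  refine subsingleton_ext_of_retract_left ⟨i, r, hir⟩ (subsingleton_ext_of_retract_left
    (.ofIso (ModuleCat.biproductIsoPi fun _ : Fin k => .of A (V × W)).symm) ?_)
  exact (Ext.biproductAddEquiv (biproduct.isBilimit _) Y n).subsingleton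

lemma InAdd.subsingleton_ext_right {X V W Y : ModuleCat.{0} A} (h : InAdd A X (.of A (V × W)))
    (hV : Subsingleton (Ext Y V n)) (hW : Subsingleton (Ext Y W n)) :
    Subsingleton (Ext Y X n) := by
  obtain ⟨k, i, r, hir⟩ := h
  have hVW : Subsingleton (Ext Y (.of A (V × W)) n) :=
    subsingleton_ext_of_retract_right (.ofIso (ModuleCat.biprodIsoProd V W).symm)
      (subsingleton_ext_biprod_right hV hW)
  refine subsingleton_ext_of_retract_right ⟨i, r, hir⟩ (subsingleton_ext_of_retract_right
    (.ofIso (ModuleCat.biproductIsoPi fun _ : Fin k => .of A (V × W)).symm) ?_)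
  exact (Ext.addEquivBiproduct Y (biproduct.isBilimit _) n).subsingleton

lemma DelLE.subsingleton_ext {m : ℕ} (h : DelLE A m M) (hmn : m ≤ n)
    (hN : HasInjectiveDimensionLE N (n + 1)) : Subsingleton (Ext M N (n + 1)) := by
  obtain ⟨X, hX, M', -, X', hX', hadd⟩ := h
  obtain ⟨k, rfl⟩ := Nat.exists_eq_add_of_le hmn
  refine (hX.subsingleton_ext_iff k).2 (hadd.subsingleton_ext_left (V := .of A A) ?_ ?_)
  · exact Ext.subsingleton_of_projective _ _ _
  · exact (hX'.subsingleton_ext_iff k).1 (hN.subsingleton _ _ _ (by lia) _)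

lemma IsMinimalInjectiveCogenerator.injective (hQ : IsMinimalInjectiveCogenerator A Q) :
    Injective Q := by
  obtain ⟨_, _, _, _, _, _, h, -⟩ := hQ
  exact h

lemma DesLE.subsingleton_ext {m : ℕ} (h : DesLE A m M) (hmn : m ≤ n)
    (hN : HasProjectiveDimensionLE N (n + 1)) : Subsingleton (Ext N M (n + 1)) := by
  obtain ⟨X, hX, Q, hQ, M', -, X', hX', hadd⟩ := h
  obtain ⟨k, rfl⟩ := Nat.exists_eq_add_of_le hmn
  refine (hX.subsingleton_ext_iff k).2 (hadd.subsingleton_ext_right (V := Q) ?_ ?_)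
  · have := hQ.injective
    exact Ext.subsingleton_of_injective _ _ _
  · exact (hX'.subsingleton_ext_iff k).1 (hN.subsingleton _ _ _ (by lia) _)

lemma delAlg_le_iff : delAlg A ≤ n ↔
    ∀ S : ModuleCat.{0} A, IsSimpleModule A S → ∃ m ≤ n, DelLE A m S := by
  simp only [delAlg, sSup_le_iff, Set.mem_ofPred_eq, forall_exists_index, and_imp,
    forall_comm (α := ℕ∞), forall_eq', delLevel, sInf_natCast_le_iff]

lemma desAlg_le_iff : desAlg A ≤ n ↔
    ∀ S : ModuleCat.{0} A, IsSimpleModule A S → ∃ m ≤ n, DesLE A m S := by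
  simp only [desAlg, sSup_le_iff, Set.mem_ofPred_eq, forall_exists_index, and_imp,
    forall_comm (α := ℕ∞), forall_eq', desLevel, sInf_natCast_le_iff]

lemma injDim_le_delAlg [IsArtinianRing A] (hM : injDim A M ≠ ⊤) : injDim A M ≤ delAlg A := by
  refine enat_le_of_forall_natCast_le_imp hM fun n hdel hM => ?_
  rw [injDim_le_iff] at hM ⊢
  refine hasInjectiveDimensionLE_of_subsingleton_ext_simple fun S hS => ?_
  obtain ⟨m, hm, hS⟩ := delAlg_le_iff.1 hdel S hS
  exact hS.subsingleton_ext hm hM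

lemma projDim_le_desAlg [IsArtinianRing A] (hM : projDim A M ≠ ⊤) : projDim A M ≤ desAlg A := by
  refine enat_le_of_forall_natCast_le_imp hM fun n hdes hM => ?_
  rw [projDim_le_iff] at hM ⊢
  refine hasProjectiveDimensionLE_of_subsingleton_ext_simple hM fun S hS => ?_
  obtain ⟨m, hm, hS⟩ := desAlg_le_iff.1 hdes S hS
  exact hS.subsingleton_ext hm hM

end LowerBounds

section Socle

lemma isSemisimpleModule_span_singleton_of_jacobson_smul_eq_zero {A M : Type*} [Ring A]
    [IsSemiprimaryRing A] [AddCommGroup M] [Module A M] {x : M}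
    (hx : ∀ a ∈ Ring.jacobson A, a • x = 0) : IsSemisimpleModule A (Submodule.span A {x}) := by
  have hJ : Module.IsTorsionBySet A (Submodule.span A {x}) (Ring.jacobson A : Set A) := by
    rintro ⟨y, hy⟩ ⟨a, ha⟩
    obtain ⟨b, rfl⟩ := Submodule.mem_span_singleton.1 hy
    refine Subtype.ext ?_
    change a • b • x = 0
    rw [← mul_smul, hx _ (Ideal.mul_mem_right b _ ha)]
  let _ := hJ.module
  exact hJ.isSemisimpleModule_iff.1 inferInstance

variable {R A M : Type*} [CommRing R] [Ring A] [Algebra R A] [AddCommGroup M] [Module R M]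
  [Module A M] [IsScalarTower R A M]

/-- The map `x ↦ (a ↦ a • x)` from `M` to `Hom_R(I, IM)` has kernel the annihilator of `I`. -/
lemma isNoetherian_of_isNoetherian_smul_top (I : Ideal A) [Module.Finite R (I.restrictScalars R)]
    (U : Submodule R M) [IsNoetherian R U] (h : ∀ x : M, (∀ a ∈ I, a • x = 0) → x ∈ U)
    (hI : IsNoetherian R ((I • ⊤ : Submodule A M).restrictScalars R)) : IsNoetherian R M := by
  have mem (a : I) (x : M) : a.1 • x ∈ (I • ⊤ : Submodule A M) :=
    Submodule.smul_mem_smul a.2 trivial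
  let φ : M →ₗ[R] I.restrictScalars R →ₗ[R] (I • ⊤ : Submodule A M).restrictScalars R :=
    { toFun x :=
        { toFun a := ⟨a.1 • x, mem a x⟩
          map_add' a b := Subtype.ext (add_smul a.1 b.1 x)
          map_smul' c a := Subtype.ext (smul_assoc c a.1 x) }
      map_add' x y := LinearMap.ext fun a => Subtype.ext (smul_add a.1 x y)
      map_smul' c x := LinearMap.ext fun a => Subtype.ext (smul_algebra_smul_comm c a.1 x) }
  have hφ : φ.ker ≤ U := fun x hx => h x fun a ha =>
    congrArg Subtype.val (LinearMap.congr_fun hx ⟨a, ha⟩)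
  have : IsNoetherian R φ.ker := isNoetherian_of_le hφ
  exact isNoetherian_of_range_eq_ker φ.ker.subtype φ φ.ker.range_subtype

lemma isNoetherian_of_annihilator_jacobson_le [IsSemiprimaryRing A]
    [Module.Finite R ((Ring.jacobson A).restrictScalars R)] (U : Submodule R M)
    [IsNoetherian R U] (h : ∀ x : M, (∀ a ∈ Ring.jacobson A, a • x = 0) → x ∈ U) :
    IsNoetherian R M := by
  revert U
  refine IsSemiprimaryRing.induction R A M (P := fun M _ _ _ => ∀ U : Submodule R M,
    IsNoetherian R U → (∀ x : M, (∀ a ∈ Ring.jacobson A, a • x = 0) → x ∈ U) →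
      IsNoetherian R M) ?_ ?_
  · intro M _ _ _ _ _ hJ U _ h
    have hU : U = ⊤ := eq_top_iff.2 fun x _ => h x fun a ha => @hJ x ⟨a, ha⟩
    exact isNoetherian_top_iff.1 (hU ▸ ‹_›)
  · intro M _ _ _ _ JM hs _ U _ h
    let i : JM.restrictScalars R →ₗ[R] M := (JM.restrictScalars R).subtype
    have : IsNoetherian R (U.comap i) :=
      isNoetherian_of_injective (i.restrict (p := U.comap i) (q := U) fun _ => id)
        fun x y hxy => Subtype.ext (Subtype.ext (congrArg (fun z : U => z.1) hxy))
    exact isNoetherian_of_isNoetherian_smul_top (Ring.jacobson A) U h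
      (hs (U.comap i) this fun x hx => h x fun a ha => congrArg Subtype.val (hx a ha))

end Socle

section Cogenerator

variable {A : Type} [Ring A] {M I Q : ModuleCat.{0} A} {f : M ⟶ I}

lemma IsInjectiveEnvelopeHom.eq_bot_of_disjoint (hf : IsInjectiveEnvelopeHom A f)
    {N : Submodule A I} (hN : Disjoint f.hom.range N) : N = ⊥ := by
  obtain ⟨-, hmono, hess⟩ := hf
  have hfN : Mono (f ≫ ModuleCat.ofHom N.mkQ) := by
    rw [ModuleCat.mono_iff_ker_eq_bot, ModuleCat.hom_comp, ModuleCat.hom_ofHom,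
      LinearMap.ker_comp, N.ker_mkQ]
    refine Submodule.map_injective_of_injective ((ModuleCat.mono_iff_injective f).1 hmono) ?_
    rw [Submodule.map_comap_eq, hN.eq_bot, Submodule.map_bot]
  have := (ModuleCat.mono_iff_ker_eq_bot _).1 (hess _ _ hfN)
  rwa [ModuleCat.hom_ofHom, N.ker_mkQ] at this

lemma IsInjectiveEnvelopeHom.le_range_of_isSemisimpleModule (hf : IsInjectiveEnvelopeHom A f)
    (T : Submodule A I) [IsSemisimpleModule A T] : T ≤ f.hom.range := by
  obtain ⟨N, hN⟩ := exists_isCompl (f.hom.range.comap T.subtype)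
  have hdisj : Disjoint f.hom.range (N.map T.subtype) := by
    rw [Submodule.disjoint_def]
    rintro _ hx ⟨y, hy, rfl⟩
    rw [Submodule.disjoint_def.1 hN.disjoint y hx hy, map_zero]
  have hN' : N = ⊥ :=
    Submodule.map_injective_of_injective T.injective_subtype
      ((hf.eq_bot_of_disjoint hdisj).trans (Submodule.map_bot _).symm)
  exact Submodule.comap_subtype_eq_top.1 (eq_top_of_isCompl_bot (hN' ▸ hN))

lemma IsInjectiveEnvelopeHom.mem_range_of_jacobson_smul_eq_zero [IsSemiprimaryRing A]
    (hf : IsInjectiveEnvelopeHom A f) {x : I} (hx : ∀ a ∈ Ring.jacobson A, a • x = 0) :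
    x ∈ f.hom.range := by
  have := isSemisimpleModule_span_singleton_of_jacobson_smul_eq_zero hx
  exact hf.le_range_of_isSemisimpleModule _ (Submodule.mem_span_singleton_self x)

lemma IsInjectiveEnvelopeHom.finite (R : Type*) [CommRing R] [IsArtinianRing R] [Algebra R A]
    [Module.Finite R A] [Module.Finite A M] (hf : IsInjectiveEnvelopeHom A f) :
    Module.Finite A I := by
  have : IsArtinianRing A := IsArtinianRing.of_finite R A
  let _ : Module R I := Module.compHom I (algebraMap R A)
  have : IsScalarTower R A I := .of_compHom _ _ _
  have : IsNoetherian R (f.hom.range.restrictScalars R) := by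
    have : Module.Finite R f.hom.range := .trans A _
    exact inferInstanceAs (IsNoetherian R f.hom.range)
  have : Module.Finite R ((Ring.jacobson A).restrictScalars R) := inferInstance
  have : IsNoetherian R I := isNoetherian_of_annihilator_jacobson_le
    (f.hom.range.restrictScalars R) fun x hx => hf.mem_range_of_jacobson_smul_eq_zero hx
  exact Module.Finite.of_restrictScalars_finite R A I

lemma IsMinimalInjectiveCogenerator.finite (R : Type*) [CommRing R] [IsArtinianRing R]
    [Algebra R A] [Module.Finite R A] (hQ : IsMinimalInjectiveCogenerator A Q) :
    Module.Finite A Q := by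
  obtain ⟨ι, _, S, hS, -, f, hf⟩ := hQ
  exact hf.finite R

lemma IsMinimalInjectiveCogenerator.exists_injective (hQ : IsMinimalInjectiveCogenerator A Q)
    (S : Type) [AddCommGroup S] [Module A S] [IsSimpleModule A S] :
    ∃ f : S →ₗ[A] Q, Function.Injective f := by
  obtain ⟨ι, _, T, -, hT, f, -, hf, -⟩ := hQ
  obtain ⟨i, ⟨e⟩, -⟩ := hT (.of A S) ‹_›
  classical
  exact ⟨f.hom ∘ₗ LinearMap.single A (fun i => T i) i ∘ₗ e.toLinearMap,
    ((ModuleCat.mono_iff_injective f).1 hf).comp ((Pi.single_injective i).comp e.injective)⟩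

end Cogenerator

section Essential

variable {C : Type*} [Category* C] {X E M : C}

/-- By essentiality, any comparison `X ⟶ E ⟶ X` over `M` is an isomorphism. -/
lemma projective_of_essential_epi [Projective E] (f : X ⟶ M) [Epi f]
    (hf : ∀ e : X ⟶ X, Epi (e ≫ f) → IsIso e) (i : X ⟶ E) (p : E ⟶ M) (hip : i ≫ p = f) :
    Projective X := by
  let l := Projective.factorThru p f
  have hl : (i ≫ l) ≫ f = f := by rw [Category.assoc, Projective.factorThru_comp, hip]
  have := hf (i ≫ l) (by rwa [hl])
  have r : Retract X E := ⟨i, l ≫ inv (i ≫ l), by rw [← Category.assoc, IsIso.hom_inv_id]⟩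
  exact r.projective

lemma injective_of_essential_mono [Injective E] (f : M ⟶ X) [Mono f]
    (hf : ∀ e : X ⟶ X, Mono (f ≫ e) → IsIso e) (p : E ⟶ X) (j : M ⟶ E) (hjp : j ≫ p = f) :
    Injective X := by
  let l := Injective.factorThru j f
  have hl : f ≫ l ≫ p = f := by rw [← Category.assoc, Injective.comp_factorThru, hjp]
  have := hf (l ≫ p) (by rwa [hl])
  have r : Retract X E := ⟨l, p ≫ inv (l ≫ p), by rw [← Category.assoc, IsIso.hom_inv_id]⟩
  exact r.injective

lemma isIso_of_epi_of_isNoetherian {A : Type*} [Ring A] {M : ModuleCat A}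
    [IsNoetherian A M] (e : M ⟶ M) [Epi e] : IsIso e :=
  (ConcreteCategory.isIso_iff_bijective e).2
    (IsNoetherian.bijective_of_surjective_endomorphism e.hom
      ((ModuleCat.epi_iff_surjective e).1 ‹_›))

lemma isIso_of_mono_of_isArtinian {A : Type*} [Ring A] {M : ModuleCat A}
    [IsArtinian A M] (e : M ⟶ M) [Mono e] : IsIso e :=
  (ConcreteCategory.isIso_iff_bijective e).2
    (IsArtinian.bijective_of_injective_endomorphism e.hom
      ((ModuleCat.mono_iff_injective e).1 ‹_›))

end Essential

section Covers

variable {A : Type} [Ring A] {M E : ModuleCat.{0} A}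

/-- The cover is the restriction of `p` to a minimal submodule still mapping onto `M`. -/
lemma exists_isProjectiveCoverHom [Projective E] [IsArtinian A E] [IsNoetherian A E] (p : E ⟶ M)
    [Epi p] : ∃ (P : Submodule A E) (f : .of A P ⟶ M), IsProjectiveCoverHom A f := by
  have hp := (ModuleCat.epi_iff_range_eq_top p).1 ‹_›
  obtain ⟨P, hP⟩ := exists_minimal_of_wellFoundedLT
    (fun P : Submodule A E => P.map p.hom = ⊤) ⟨⊤, by rwa [Submodule.map_top]⟩
  let i : ModuleCat.of A P ⟶ E := ModuleCat.ofHom P.subtype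
  have hrange {N : ModuleCat A} (g : N ⟶ .of A P) :
      (g ≫ i ≫ p).hom.range = (g.hom.range.map P.subtype).map p.hom := by
    simp [i, LinearMap.range_comp, Submodule.map_comp]
  have hf : Epi (i ≫ p) := by
    simpa [ModuleCat.epi_iff_range_eq_top, i, LinearMap.range_comp] using hP.prop
  have hess (N : ModuleCat A) (g : N ⟶ .of A P) (hg : Epi (g ≫ i ≫ p)) : Epi g := by
    rw [ModuleCat.epi_iff_range_eq_top, hrange] at hg
    rw [ModuleCat.epi_iff_range_eq_top]
    refine Submodule.map_injective_of_injective P.injective_subtype ?_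
    rw [Submodule.map_subtype_top]
    exact hP.eq_of_le hg (Submodule.map_subtype_le _ _)
  refine ⟨P, i ≫ p, projective_of_essential_epi (i ≫ p) (fun e he => ?_) i p rfl, hf, hess⟩
  have := hess _ e he
  exact isIso_of_epi_of_isNoetherian (M := .of A P) e

/-- The envelope is the image of `j` in the quotient by a maximal submodule meeting `M`
trivially. -/
lemma exists_isInjectiveEnvelopeHom [Injective E] [IsArtinian A E] [IsNoetherian A E] (j : M ⟶ E)
    [Mono j] : ∃ (N : Submodule A E) (f : M ⟶ .of A (E ⧸ N)), IsInjectiveEnvelopeHom A f := by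
  have hj := (ModuleCat.mono_iff_ker_eq_bot j).1 ‹_›
  obtain ⟨N, hN⟩ := exists_maximal_of_wellFoundedGT
    (fun N : Submodule A E => N.comap j.hom = ⊥) ⟨⊥, hj⟩
  let q : E ⟶ .of A (E ⧸ N) := ModuleCat.ofHom N.mkQ
  have hf : Mono (j ≫ q) := by
    simpa [ModuleCat.mono_iff_ker_eq_bot, q, LinearMap.ker_comp] using hN.prop
  have hess (X : ModuleCat A) (g : .of A (E ⧸ N) ⟶ X) (hg : Mono ((j ≫ q) ≫ g)) : Mono g := by
    rw [ModuleCat.mono_iff_ker_eq_bot] at hg ⊢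
    have hg : (g.hom.ker.comap N.mkQ).comap j.hom = ⊥ := hg
    refine Submodule.comap_injective_of_surjective N.mkQ_surjective ?_
    rw [Submodule.comap_bot, N.ker_mkQ]
    exact (hN.eq_of_le hg (N.le_comap_mkQ _)).symm
  refine ⟨N, j ≫ q, injective_of_essential_mono (j ≫ q) (fun e he => ?_) q j rfl, hf, hess⟩
  have := hess _ e he
  exact isIso_of_mono_of_isArtinian (M := .of A (E ⧸ N)) e

lemma exists_injective_pi {Q : Type} [AddCommGroup Q] [Module A Q] [Module.Injective A Q]
    (hQ : ∀ (S : Type) [AddCommGroup S] [Module A S] [IsSimpleModule A S],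
      ∃ f : S →ₗ[A] Q, Function.Injective f)
    {M : Type} [AddCommGroup M] [Module A M] (hM : IsFiniteLength A M) :
    ∃ (k : ℕ) (f : M →ₗ[A] Fin k → Q), Function.Injective f := by
  induction hM with
  | of_subsingleton => exact ⟨0, 0, Function.injective_of_subsingleton _⟩
  | @of_simple_quotient M _ _ N _ _ ih =>
    obtain ⟨k, f, hf⟩ := ih
    obtain ⟨g, hg⟩ := Module.Injective.extension_property A (Fin k → Q) N M N.subtype
      N.injective_subtype f
    obtain ⟨s, hs⟩ := hQ (M ⧸ N)
    refine ⟨k + 1, LinearMap.pi (Fin.cons (s ∘ₗ N.mkQ) fun i => LinearMap.proj i ∘ₗ g),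
      (injective_iff_map_eq_zero _).2 fun x hx => ?_⟩
    have hxN : x ∈ N := (Submodule.Quotient.mk_eq_zero N).1
      ((map_eq_zero_iff s hs).1 (congrFun hx 0))
    have hgx : g x = 0 := funext fun i => congrFun hx i.succ
    have hfx : f ⟨x, hxN⟩ = 0 := (LinearMap.congr_fun hg ⟨x, hxN⟩).symm.trans hgx
    exact congrArg Subtype.val ((map_eq_zero_iff f hf).1 hfx)

variable [IsArtinianRing A]

lemma exists_finite_isNthSyzygy (n : ℕ) (M : ModuleCat.{0} A) [Module.Finite A M] :
    ∃ X : ModuleCat.{0} A, Module.Finite A X ∧ IsNthSyzygy A n M X := by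
  induction n generalizing M with
  | zero => exact ⟨M, ‹_›, ⟨Iso.refl M⟩⟩
  | succ n ih =>
    obtain ⟨k, p, hp⟩ := Module.Finite.exists_fin' A M
    have : Epi (ModuleCat.ofHom p) := (ModuleCat.epi_iff_surjective _).2 hp
    obtain ⟨P, f, hf⟩ := exists_isProjectiveCoverHom (ModuleCat.ofHom p)
    have : Module.Finite A (kernel f : ModuleCat A) :=
      .of_injective (kernel.ι f).hom ((ModuleCat.mono_iff_injective _).1 inferInstance)
    obtain ⟨X, hX, hX'⟩ := ih (kernel f)
    exact ⟨X, hX, kernel f, ⟨.of A P, f, hf, ⟨Iso.refl _⟩⟩, hX'⟩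

lemma exists_injective_pi_of_finite {Q : ModuleCat.{0} A} (hQ : IsMinimalInjectiveCogenerator A Q)
    (M : Type) [AddCommGroup M] [Module A M] [Module.Finite A M] :
    ∃ (k : ℕ) (f : M →ₗ[A] Fin k → Q), Function.Injective f := by
  have : Module.Injective A Q := (Module.injective_iff_injective_object A Q).2 hQ.injective
  exact exists_injective_pi hQ.exists_injective
    (isFiniteLength_iff_isNoetherian_isArtinian.2 ⟨inferInstance, inferInstance⟩)

lemma exists_finite_isNthCosyzygy {Q : ModuleCat.{0} A} [Module.Finite A Q]
    (hQ : IsMinimalInjectiveCogenerator A Q) (n : ℕ) (M : ModuleCat.{0} A) [Module.Finite A M] :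
    ∃ X : ModuleCat.{0} A, Module.Finite A X ∧ IsNthCosyzygy A n M X := by
  have : Module.Injective A Q := (Module.injective_iff_injective_object A Q).2 hQ.injective
  induction n generalizing M with
  | zero => exact ⟨M, ‹_›, ⟨Iso.refl M⟩⟩
  | succ n ih =>
    obtain ⟨k, j, hj⟩ := exists_injective_pi_of_finite hQ M
    have : Mono (ModuleCat.ofHom j) := (ModuleCat.mono_iff_injective _).2 hj
    have : Injective (ModuleCat.of A (Fin k → Q)) :=
      (Module.injective_iff_injective_object A _).1 inferInstance
    obtain ⟨N, f, hf⟩ := exists_isInjectiveEnvelopeHom (ModuleCat.ofHom j)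
    have : Module.Finite A (cokernel f : ModuleCat A) :=
      .of_surjective (cokernel.π f).hom ((ModuleCat.epi_iff_surjective _).1 inferInstance)
    obtain ⟨X, hX, hX'⟩ := ih (cokernel f)
    exact ⟨X, hX, cokernel f, ⟨.of A _, f, hf, ⟨Iso.refl _⟩⟩, hX'⟩

end Covers

section UpperBounds

variable {A : Type} [Ring A] {M X Y Q : ModuleCat.{0} A}

lemma IsNthSyzygy.isNonminimalSyzygy {n : ℕ} (h : IsNthSyzygy A n M X) :
    IsNonminimalSyzygy n M X := by
  induction n generalizing M with
  | zero => exact h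
  | succ n ih =>
    obtain ⟨Y, ⟨P, f, ⟨hP, hf, -⟩, ⟨e⟩⟩, h⟩ := h
    exact ⟨P, f, hP, hf, (ih h).of_iso e (Iso.refl X)⟩

lemma IsNthCosyzygy.isNonminimalSyzygy_op {n : ℕ} (h : IsNthCosyzygy A n M X) :
    IsNonminimalSyzygy n (Opposite.op M) (Opposite.op X) := by
  induction n generalizing M with
  | zero => exact ⟨h.some.symm.op⟩
  | succ n ih =>
    obtain ⟨Y, ⟨I, f, ⟨hI, hf, -⟩, ⟨e⟩⟩, h⟩ := h
    exact ⟨.op I, f.op, inferInstance, inferInstance,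
      (ih h).of_iso (e.symm.op ≪≫ (kernelOpOp f).symm) (Iso.refl _)⟩

lemma inAdd_of_comp_add_comp_eq_id {V : ModuleCat.{0} A} {n : ℕ} (a : X ⟶ Y) (r : Y ⟶ X)
    (s : X ⟶ .of A (Fin n → V)) (t : .of A (Fin n → V) ⟶ X) (h : a ≫ r + s ≫ t = 𝟙 X) :
    InAdd A X (.of A (V × Y)) := by
  let i : X →ₗ[A] Fin (n + 1) → V × Y :=
    LinearMap.pi (Fin.cons (LinearMap.inr A V Y ∘ₗ a.hom)
      fun j => LinearMap.inl A V Y ∘ₗ LinearMap.proj j ∘ₗ s.hom)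
  let p : (Fin (n + 1) → V × Y) →ₗ[A] X :=
    r.hom ∘ₗ LinearMap.snd A V Y ∘ₗ LinearMap.proj 0 +
      t.hom ∘ₗ LinearMap.pi fun j : Fin n => LinearMap.fst A V Y ∘ₗ LinearMap.proj j.succ
  refine ⟨n + 1, ModuleCat.ofHom i, ModuleCat.ofHom p, ?_⟩
  ext x
  exact congrArg (fun f => f.hom x) h

lemma IsStableRetract.inAdd [Module.Finite A X] (h : IsStableRetract X Y) :
    InAdd A X (.of A (A × Y)) := by
  obtain ⟨P, _, a, r, s, t, h⟩ := h
  obtain ⟨n, p, hp⟩ := Module.Finite.exists_fin' A X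
  have : Epi (ModuleCat.ofHom p) := (ModuleCat.epi_iff_surjective _).2 hp
  refine inAdd_of_comp_add_comp_eq_id (V := .of A A) a r
    (s ≫ Projective.factorThru t (ModuleCat.ofHom p)) (ModuleCat.ofHom p) ?_
  rw [Category.assoc, Projective.factorThru_comp, h]

variable [IsArtinianRing A]

lemma IsStableRetract.inAdd_of_op [Module.Finite A X] (hQ : IsMinimalInjectiveCogenerator A Q)
    (h : IsStableRetract (Opposite.op X) (Opposite.op Y)) : InAdd A X (.of A (Q × Y)) := by
  obtain ⟨P, _, a, r, s, t, h⟩ := h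
  obtain ⟨n, j, hj⟩ := exists_injective_pi_of_finite hQ X
  have : Mono (ModuleCat.ofHom j) := (ModuleCat.mono_iff_injective _).2 hj
  refine inAdd_of_comp_add_comp_eq_id r.unop a.unop (ModuleCat.ofHom j)
    (Injective.factorThru t.unop (ModuleCat.ofHom j) ≫ s.unop) ?_
  rw [Injective.comp_factorThru_assoc]
  exact congrArg Quiver.Hom.unop h

variable [Module.Finite A Q]

lemma delLE_of_mono {n : ℕ} [Module.Finite A M] (f : M ⟶ Q) [Mono f]
    (hQ : HasProjectiveDimensionLE Q n) : DelLE A n M := by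
  have : Module.Finite A (cokernel f : ModuleCat A) :=
    .of_surjective (cokernel.π f).hom ((ModuleCat.epi_iff_surjective _).1 inferInstance)
  obtain ⟨X, _, hX⟩ := exists_finite_isNthSyzygy n M
  obtain ⟨X', -, hX'⟩ := exists_finite_isNthSyzygy (n + 1) (cokernel f)
  exact ⟨X, hX, cokernel f, this, X', hX', (isStableRetract_of_shortExact (shortExact_cokernel f)
    hQ hX.isNonminimalSyzygy hX'.isNonminimalSyzygy).inAdd⟩

lemma desLE_of_epi {n : ℕ} {E : ModuleCat.{0} A} [Module.Finite A E]
    (hQ : IsMinimalInjectiveCogenerator A Q) [Module.Finite A M] (f : E ⟶ M) [Epi f]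
    (hE : HasInjectiveDimensionLE E n) : DesLE A n M := by
  have : Module.Finite A (kernel f : ModuleCat A) :=
    .of_injective (kernel.ι f).hom ((ModuleCat.mono_iff_injective _).1 inferInstance)
  obtain ⟨X, _, hX⟩ := exists_finite_isNthCosyzygy hQ n M
  obtain ⟨X', -, hX'⟩ := exists_finite_isNthCosyzygy hQ (n + 1) (kernel f)
  exact ⟨X, hX, Q, hQ, kernel f, this, X', hX',
    (isStableRetract_of_shortExact (shortExact_kernel f).op (hasProjectiveDimensionLE_op hE)
      hX.isNonminimalSyzygy_op hX'.isNonminimalSyzygy_op).inAdd_of_op hQ⟩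

lemma delAlg_le_projDim (hQ : IsMinimalInjectiveCogenerator A Q) : delAlg A ≤ projDim A Q := by
  refine WithTop.forall_le_coe_iff_le.1 fun d (hd : projDim A Q ≤ d) =>
    delAlg_le_iff.2 fun S _ => ?_
  obtain ⟨f, hf⟩ := hQ.exists_injective S
  have : Mono (ModuleCat.ofHom f) := (ModuleCat.mono_iff_injective _).2 hf
  exact ⟨d, le_rfl, delLE_of_mono (M := S) (ModuleCat.ofHom f) (projDim_le_iff.1 hd)⟩

lemma desAlg_le_injDim (hQ : IsMinimalInjectiveCogenerator A Q) :
    desAlg A ≤ injDim A (.of A A) := by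
  refine WithTop.forall_le_coe_iff_le.1 fun d (hd : injDim A (.of A A) ≤ d) =>
    desAlg_le_iff.2 fun S _ => ?_
  have := IsSimpleModule.nontrivial A S
  obtain ⟨x, hx⟩ := exists_ne (0 : S)
  let f : .of A A ⟶ S := ModuleCat.ofHom (LinearMap.toSpanSingleton A S x)
  have : Epi f := (ModuleCat.epi_iff_surjective _).2
    (IsSimpleModule.toSpanSingleton_surjective A hx)
  have : Module.Finite A (ModuleCat.of A A) := inferInstanceAs (Module.Finite A A)
  exact ⟨d, le_rfl, desLE_of_epi hQ f (injDim_le_iff.1 hd)⟩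

end UpperBounds

section FinitisticDimensions

variable {A : Type} [Ring A]

lemma finProDim_le_bigFinProDim : finProDim A ≤ bigFinProDim A :=
  sSup_le_sSup fun _ ⟨M, _, hM⟩ => ⟨M, hM⟩

lemma finInjDim_le_bigFinInjDim : finInjDim A ≤ bigFinInjDim A :=
  sSup_le_sSup fun _ ⟨M, _, hM⟩ => ⟨M, hM⟩

lemma bigFinProDim_le_desAlg [IsArtinianRing A] : bigFinProDim A ≤ desAlg A := by
  refine sSup_le ?_
  rintro _ ⟨M, rfl, hM⟩
  exact projDim_le_desAlg hM

lemma bigFinInjDim_le_delAlg [IsArtinianRing A] : bigFinInjDim A ≤ delAlg A := by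
  refine sSup_le ?_
  rintro _ ⟨M, rfl, hM⟩
  exact injDim_le_delAlg hM

end FinitisticDimensions

end ArtinAlg

open ArtinAlg in
theorem statement_5_general (A : Type) [Ring A] [IsArtinianRing A] (Q : ModuleCat.{0} A)
    [Module.Finite A Q] (hQ : IsMinimalInjectiveCogenerator A Q)
    (d d' : ℕ) (hd : projDim A Q = d) (hd' : injDim A (ModuleCat.of A A) = d') :
    finProDim A = finInjDim A ∧ finInjDim A = bigFinProDim A ∧
      bigFinProDim A = bigFinInjDim A ∧ bigFinInjDim A = delAlg A ∧
      delAlg A = desAlg A ∧ desAlg A = (d : ℕ∞) ∧ (d : ℕ∞) = (d' : ℕ∞) := by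
  have h₁ : d ≤ finProDim A := le_sSup ⟨Q, ‹_›, hd, ENat.natCast_ne_top d⟩
  have h₂ : finProDim A ≤ bigFinProDim A := finProDim_le_bigFinProDim
  have h₃ : bigFinProDim A ≤ desAlg A := bigFinProDim_le_desAlg
  have h₄ : desAlg A ≤ d' := (desAlg_le_injDim hQ).trans_eq hd'
  have h₅ : d' ≤ finInjDim A :=
    le_sSup ⟨.of A A, inferInstanceAs (Module.Finite A A), hd', ENat.natCast_ne_top d'⟩
  have h₆ : finInjDim A ≤ bigFinInjDim A := finInjDim_le_bigFinInjDim
  have h₇ : bigFinInjDim A ≤ delAlg A := bigFinInjDim_le_delAlg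
  have h₈ : delAlg A ≤ d := (delAlg_le_projDim hQ).trans_eq hd
  refine ⟨?_, ?_, ?_, ?_, ?_, ?_, ?_⟩ <;> order

open ArtinAlg in
/-- Let `A` be an artin algebra with minimal injective cogenerator `Q`.
Assume `pd Q = d < ∞` and `id (A A) = d' < ∞`. Then
`fin-pro A = fin-inj A = Fin-pro A = Fin-inj A = del A = des A = d = d'`. -/
theorem statement_5 (R : Type) [CommRing R] [IsArtinianRing R]
    (A : Type) [Ring A] [Algebra R A] [Module.Finite R A]
    (Q : ModuleCat.{0} A) (hQ : IsMinimalInjectiveCogenerator A Q)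
    (d d' : ℕ) (hd : projDim A Q = d) (hd' : injDim A (ModuleCat.of A A) = d') :
    finProDim A = finInjDim A ∧ finInjDim A = bigFinProDim A ∧
      bigFinProDim A = bigFinInjDim A ∧ bigFinInjDim A = delAlg A ∧
      delAlg A = desAlg A ∧ desAlg A = (d : ℕ∞) ∧ (d : ℕ∞) = (d' : ℕ∞) := by
  have : IsArtinianRing A := IsArtinianRing.of_finite R A
  have : Module.Finite A Q := hQ.finite R
  exact statement_5_general A Q hQ d d' hd hd'
end
end

section
/- Let A be a Nakayama algebra. A simple module U lies in the image of ψ if and only if pd U ≥ 2, and a simple module T lies in the image of γ if and only if id T ≥ 2. -/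
open CategoryTheory CategoryTheory.Limits

noncomputable section

/-!
For the forward directions, let `0 → T → E → U → 0` be a non-split exact sequence. If `T` is a
quotient of an injective module then `pd U ≥ 2`: were the kernel of some `Q → U` with `Q`
projective again projective, the map from it to `T` would lift to the injective module, extend to
`Q` and so split the sequence. The claim for `id T` is dual.

For the converse, let `P → U` be the projective cover of a simple module `U`. Over a Nakayama
algebra its kernel `K` is uniserial, and if `K` is not projective then its projective cover `Q` is
injective. Hence `Q` is the injective envelope of its socle `S`, and `top Q = K / rad K` is `τ U`,
because `0 → K / rad K → P / rad K → U → 0` is almost split. Here a map `X → U` lifts because, in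
the pullback of this sequence with the projective presentation of `U`, either the image of
`K → ker (X → U)` lies in the radical of `ker (X → U)` and then extends to `P`, which splits
`X → U`, or else `K → K / rad K` factors through `ker (X → U)`, which glues to a lift.
-/

namespace ArtinAlg

/-- A uniserial module: its submodules form a chain. Unlike the predicate `IsUniserial` on
`ModuleCat`, this is a class on unbundled modules, so that it passes to submodules and quotients
by instance search. -/
class UniserialModule (A M : Type*) [Ring A] [AddCommGroup M] [Module A M] : Prop where
  le_total : ∀ N₁ N₂ : Submodule A M, N₁ ≤ N₂ ∨ N₂ ≤ N₁

section Factorization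

variable {A L M N : Type*} [Ring A] [AddCommGroup L] [Module A L] [AddCommGroup M] [Module A M]
  [AddCommGroup N] [Module A N]

theorem exists_comp_eq_of_ker_le {π : M →ₗ[A] N} (hπ : Function.Surjective π) {f : M →ₗ[A] L}
    (h : LinearMap.ker π ≤ LinearMap.ker f) : ∃ g : N →ₗ[A] L, g ∘ₗ π = f :=
  ⟨(LinearMap.ker π).liftQ f h ∘ₗ (π.quotKerEquivOfSurjective hπ).symm, by
    ext x
    have hx : (π.quotKerEquivOfSurjective hπ).symm (π x) = (LinearMap.ker π).mkQ x := by
      rw [LinearEquiv.symm_apply_eq]; rfl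
    simp [hx]⟩

theorem exists_comp_eq_of_range_le {i : N →ₗ[A] M} (hi : Function.Injective i) {f : L →ₗ[A] M}
    (h : LinearMap.range f ≤ LinearMap.range i) : ∃ g : L →ₗ[A] N, i ∘ₗ g = f :=
  ⟨(LinearEquiv.ofInjective i hi).symm ∘ₗ f.codRestrict (LinearMap.range i) fun x => h ⟨x, rfl⟩, by
    ext; simp⟩

theorem exists_comp_eq_mkQ_comp {c : M →ₗ[A] N} (hc : Function.Surjective c) {j : M →ₗ[A] L}
    (hj : Function.Injective j) : ∃ κ : N →ₗ[A] L ⧸ (LinearMap.ker c).map j,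
      κ ∘ₗ c = ((LinearMap.ker c).map j).mkQ ∘ₗ j ∧ Function.Injective κ ∧
        (Function.Surjective κ → Function.Surjective j) := by
  have hker : LinearMap.ker (((LinearMap.ker c).map j).mkQ ∘ₗ j) = LinearMap.ker c := by
    rw [LinearMap.ker_comp, Submodule.ker_mkQ, Submodule.comap_map_eq_of_injective hj]
  obtain ⟨κ, hκ⟩ := exists_comp_eq_of_ker_le hc hker.ge
  refine ⟨κ, hκ, LinearMap.ker_eq_bot.1 (Submodule.comap_injective_of_surjective hc ?_),
    fun h => ?_⟩
  · rw [← LinearMap.ker_comp, hκ, hker, Submodule.comap_bot]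
  · have hrange : (LinearMap.range j).map ((LinearMap.ker c).map j).mkQ = ⊤ := by
      rw [← LinearMap.range_comp, ← hκ, LinearMap.range_eq_top]
      exact h.comp hc
    have hsup := Submodule.comap_map_mkQ ((LinearMap.ker c).map j) (LinearMap.range j)
    rw [hrange, Submodule.comap_top, sup_eq_right.2 LinearMap.map_le_range] at hsup
    exact LinearMap.range_eq_top.1 hsup.symm

theorem exists_comp_eq_comp_subtype {d : N →ₗ[A] M} (hd : Function.Injective d) {b : L →ₗ[A] M}
    (hb : Function.Surjective b) : ∃ δ : (LinearMap.range d).comap b →ₗ[A] N,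
      d ∘ₗ δ = b ∘ₗ ((LinearMap.range d).comap b).subtype ∧ Function.Surjective δ ∧
        (Function.Injective δ → Function.Injective b) := by
  obtain ⟨δ, hδ⟩ := exists_comp_eq_of_range_le hd
    (f := b ∘ₗ ((LinearMap.range d).comap b).subtype) (by rintro _ ⟨y, rfl⟩; exact y.2)
  refine ⟨δ, hδ, fun x => ?_, fun h => (injective_iff_map_eq_zero b).2 fun p hp => ?_⟩
  · obtain ⟨p, hp⟩ := hb (d x)
    exact ⟨⟨p, x, hp.symm⟩, hd ((LinearMap.congr_fun hδ _).trans hp)⟩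
  · have hpY : p ∈ (LinearMap.range d).comap b := Submodule.mem_comap.2 (hp ▸ zero_mem _)
    have hδp : d (δ ⟨p, hpY⟩) = 0 := (LinearMap.congr_fun hδ _).trans hp
    exact congrArg Subtype.val ((map_eq_zero_iff δ h).1 ((map_eq_zero_iff d hd).1 hδp))

end Factorization

namespace UniserialModule

variable {A M N X : Type*} [Ring A] [AddCommGroup M] [Module A M] [AddCommGroup N] [Module A N]
  [AddCommGroup X] [Module A X]

theorem of_injective [UniserialModule A N] (f : M →ₗ[A] N) (hf : Function.Injective f) :
    UniserialModule A M where
  le_total N₁ N₂ := by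
    simpa only [Submodule.map_le_map_iff_of_injective hf] using le_total (N₁.map f) (N₂.map f)

theorem of_surjective [UniserialModule A M] (f : M →ₗ[A] N) (hf : Function.Surjective f) :
    UniserialModule A N where
  le_total N₁ N₂ := by
    simpa only [Submodule.comap_le_comap_iff_of_surjective hf] using
      le_total (N₁.comap f) (N₂.comap f)

instance of_isSimpleModule [IsSimpleModule A M] : UniserialModule A M where
  le_total N₁ _ := (eq_bot_or_eq_top N₁).imp (fun h => h.le.trans bot_le) fun h => le_top.trans h.ge

instance submodule [UniserialModule A M] (K : Submodule A M) : UniserialModule A K :=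
  of_injective K.subtype K.injective_subtype

instance quotient [UniserialModule A M] (K : Submodule A M) : UniserialModule A (M ⧸ K) :=
  of_surjective K.mkQ K.mkQ_surjective

theorem eq_top_or_eq_top_of_sup_eq_top [UniserialModule A M] {N₁ N₂ : Submodule A M}
    (h : N₁ ⊔ N₂ = ⊤) : N₁ = ⊤ ∨ N₂ = ⊤ :=
  (le_total N₁ N₂).symm.imp (fun h' => by rwa [sup_eq_left.2 h'] at h)
    fun h' => by rwa [sup_eq_right.2 h'] at h

theorem surjective_of_comp [UniserialModule A M] [Nontrivial N] (f : M →ₗ[A] N) (g : X →ₗ[A] M)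
    (h : Function.Surjective (f ∘ₗ g)) : Function.Surjective g := by
  rw [← LinearMap.range_eq_top]
  rcases le_total (LinearMap.range g) (LinearMap.ker f) with hle | hle
  · rw [← LinearMap.range_eq_top, LinearMap.range_le_ker_iff.1 hle, LinearMap.range_zero] at h
    exact absurd h bot_ne_top
  · have h' := congrArg (Submodule.comap f) (LinearMap.range_eq_top.2 h)
    rwa [LinearMap.range_comp, Submodule.comap_map_eq, sup_eq_left.2 hle, Submodule.comap_top] at h'

theorem injective_of_comp [UniserialModule A M] [Nontrivial N] (f : N →ₗ[A] M) (g : M →ₗ[A] X)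
    (h : Function.Injective (g ∘ₗ f)) : Function.Injective g := by
  rw [← LinearMap.ker_eq_bot] at h ⊢
  rcases le_total (LinearMap.range f) (LinearMap.ker g) with hle | hle
  · rw [LinearMap.range_le_ker_iff.1 hle, LinearMap.ker_zero] at h
    exact absurd h top_ne_bot
  · rw [LinearMap.ker_comp] at h
    rw [← Submodule.map_comap_eq_of_le hle, h, Submodule.map_bot]

theorem exists_span_singleton_eq_top (A M : Type*) [Ring A] [IsArtinianRing A] [AddCommGroup M]
    [Module A M] [UniserialModule A M] : ∃ x : M, A ∙ x = ⊤ := by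
  by_contra! hne
  have exists_lt (x : M) : ∃ y : M, A ∙ x < A ∙ y := by
    obtain ⟨y, -, hy⟩ := SetLike.exists_of_lt (hne x).lt_top
    have hyx : ¬ A ∙ y ≤ A ∙ x := fun h => hy (h (Submodule.mem_span_singleton_self y))
    exact ⟨y, ((le_total _ _).resolve_right hyx).lt_of_not_ge hyx⟩
  have exists_length_ge (n : ℕ) : ∃ x : M, n ≤ Module.length A (A ∙ x) := by
    induction n with
    | zero => exact ⟨0, zero_le⟩
    | succ n ih =>
      obtain ⟨x, hx⟩ := ih
      obtain ⟨y, hxy⟩ := exists_lt x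
      rw [Module.length_submodule] at hx
      refine ⟨y, ?_⟩
      rw [Module.length_submodule, Nat.cast_succ]
      exact (add_le_add_left hx 1).trans (Order.height_add_one_le hxy)
  obtain ⟨n, hn⟩ := ENat.ne_top_iff_exists.1 (Module.length_ne_top (R := A) (M := A))
  obtain ⟨x, hx⟩ := exists_length_ge (n + 1)
  have hle : Module.length A (A ∙ x) ≤ n := by
    rw [hn, ← LinearMap.range_toSpanSingleton]
    exact Module.length_le_of_surjective _
      (LinearMap.toSpanSingleton A M x).surjective_rangeRestrict
  exact absurd (hx.trans hle) (by exact_mod_cast n.lt_succ_self.not_ge)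

theorem exists_surjective (A M : Type*) [Ring A] [IsArtinianRing A] [AddCommGroup M]
    [Module A M] [UniserialModule A M] : ∃ f : A →ₗ[A] M, Function.Surjective f := by
  obtain ⟨x, hx⟩ := exists_span_singleton_eq_top A M
  refine ⟨LinearMap.toSpanSingleton A M x, ?_⟩
  rw [← LinearMap.range_eq_top, LinearMap.range_toSpanSingleton, hx]

instance finite (A M : Type*) [Ring A] [IsArtinianRing A] [AddCommGroup M]
    [Module A M] [UniserialModule A M] : Module.Finite A M :=
  let ⟨f, hf⟩ := exists_surjective A M
  Module.Finite.of_surjective f hf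

end UniserialModule

section Nakayama

variable {A : Type} [Ring A]

theorem IsNakayama.uniserialModule_of_forall_isCompl (hN : IsNakayama A) (M : Type)
    [AddCommGroup M] [Module A M] [Module.Finite A M]
    (h : ∀ N₁ N₂ : Submodule A M, IsCompl N₁ N₂ → N₁ = ⊥ ∨ N₂ = ⊥) : UniserialModule A M := by
  cases subsingleton_or_nontrivial M
  · exact ⟨fun N₁ N₂ => .inl (Subsingleton.elim N₁ N₂).le⟩
  · exact ⟨hN (.of A M) ‹_› ⟨‹_›, h⟩⟩

theorem IsNakayama.uniserialModule_of_forall_disjoint (hN : IsNakayama A) {M : Type}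
    [AddCommGroup M] [Module A M]
    (h : ∀ N₁ N₂ : Submodule A M, Disjoint N₁ N₂ → N₁ = ⊥ ∨ N₂ = ⊥) : UniserialModule A M where
  le_total N₁ N₂ := by
    by_contra! hne
    obtain ⟨x, hx₁, hx₂⟩ := Set.not_subset.1 hne.1
    obtain ⟨y, hy₂, hy₁⟩ := Set.not_subset.1 hne.2
    let F : Submodule A M := Submodule.span A {x, y}
    have : Module.Finite A F := Module.Finite.span_of_finite A (Set.toFinite _)
    have : UniserialModule A F := hN.uniserialModule_of_forall_isCompl F fun K₁ K₂ hK => by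
      simpa only [← LinearMap.le_ker_iff_map, Submodule.ker_subtype, le_bot_iff] using
        h _ _ (Submodule.disjoint_map F.injective_subtype hK.disjoint)
    have hx : x ∈ F := Submodule.subset_span (by simp)
    have hy : y ∈ F := Submodule.subset_span (by simp)
    rcases UniserialModule.le_total (N₁.comap F.subtype) (N₂.comap F.subtype) with hle | hle
    · exact hx₂ (hle (x := ⟨x, hx⟩) hx₁)
    · exact hy₁ (hle (x := ⟨y, hy⟩) hy₂)

/-- Krull-Schmidt in the form of an induction principle. -/
theorem IsNakayama.induction_on_finite [IsArtinianRing A] (hN : IsNakayama A)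
    {motive : ∀ (M : Type) [AddCommGroup M] [Module A M], Prop}
    (uniserial : ∀ (M : Type) [AddCommGroup M] [Module A M] [UniserialModule A M], motive M)
    (isCompl : ∀ (M : Type) [AddCommGroup M] [Module A M] (N₁ N₂ : Submodule A M),
      IsCompl N₁ N₂ → motive N₁ → motive N₂ → motive M)
    (M : Type) [AddCommGroup M] [Module A M] [Module.Finite A M] : motive M := by
  induction hn : Module.length A M using WellFoundedLT.induction generalizing M with
  | ind n ih =>
  subst hn
  by_cases h : ∀ N₁ N₂ : Submodule A M, IsCompl N₁ N₂ → N₁ = ⊥ ∨ N₂ = ⊥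
  · have := hN.uniserialModule_of_forall_isCompl M h
    exact uniserial M
  · push Not at h
    obtain ⟨N₁, N₂, hc, h₁, h₂⟩ := h
    have ne_top₁ : N₁ ≠ ⊤ := fun h => h₂ (by simpa [h] using hc.inf_eq_bot)
    have ne_top₂ : N₂ ≠ ⊤ := fun h => h₁ (by simpa [h] using hc.inf_eq_bot)
    exact isCompl M N₁ N₂ hc (ih _ (Submodule.length_lt ne_top₁) N₁ rfl)
      (ih _ (Submodule.length_lt ne_top₂) N₂ rfl)

end Nakayama

section Envelopes

theorem exists_disjoint_forall_disjoint_map_mkQ {A E : Type*} [Ring A] [AddCommGroup E]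
    [Module A E] (N : Submodule A E) : ∃ C : Submodule A E, Disjoint N C ∧
      ∀ D : Submodule A (E ⧸ C), Disjoint (N.map C.mkQ) D → D = ⊥ := by
  obtain ⟨C, -, hC⟩ := zorn_le_nonempty₀ {C : Submodule A E | Disjoint N C}
    (fun c hc hchain _ _ => ⟨sSup c,
      hchain.directedOn.disjoint_sSup_right.2 hc, fun C hC => le_sSup hC⟩) ⊥ disjoint_bot_right
  refine ⟨C, hC.prop, fun D hD => ?_⟩
  have hND : Disjoint N (D.comap C.mkQ) := Submodule.disjoint_def.2 fun x hxN hxD =>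
    have hx : C.mkQ x = 0 := Submodule.disjoint_def.1 hD _ (Submodule.mem_map_of_mem hxN) hxD
    Submodule.disjoint_def.1 hC.prop x hxN ((Submodule.Quotient.mk_eq_zero C).1 hx)
  have hle : D.comap C.mkQ ≤ C := hC.le_of_ge hND (Submodule.le_comap_mkQ C D)
  rw [← Submodule.map_comap_eq_of_surjective C.mkQ_surjective D, eq_bot_iff,
    Submodule.map_le_iff_le_comap]
  simpa using hle

theorem injective_of_comp_eq_id.{u, v} {A : Type u} [Ring A] {E I : Type v} [AddCommGroup E]
    [Module A E] [AddCommGroup I] [Module A I] [Module.Injective A E] (i : I →ₗ[A] E)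
    (r : E →ₗ[A] I) (h : r ∘ₗ i = LinearMap.id) : Module.Injective A I where
  out X Y _ _ _ _ f hf g := by
    obtain ⟨k, hk⟩ := Module.Injective.out f hf (i ∘ₗ g)
    exact ⟨r ∘ₗ k, fun x => by simpa [hk] using LinearMap.congr_fun h (g x)⟩

theorem injective_of_subsingleton {A : Type*} [Ring A] (I : Type*) [AddCommGroup I] [Module A I]
    [Subsingleton I] : Module.Injective A I :=
  ⟨fun _ _ _ _ _ _ _ _ _ => ⟨0, fun _ => Subsingleton.elim _ _⟩⟩

variable {A : Type} [Ring A]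

theorem exists_injective_of_module (Y : Type) [AddCommGroup Y] [Module A Y] :
    ∃ (E : ModuleCat.{0} A) (i : Y →ₗ[A] E), Module.Injective A E ∧ Function.Injective i :=
  ⟨Injective.under (ModuleCat.of A Y), (Injective.ι (ModuleCat.of A Y)).hom,
    (Module.injective_iff_injective_object A _).2 (Injective.injective_under _),
    (ModuleCat.mono_iff_injective _).1 inferInstance⟩

variable [IsArtinianRing A]

theorem IsNakayama.exists_uniserial_injective (hN : IsNakayama A) (Y : Type) [AddCommGroup Y]
    [Module A Y] [UniserialModule A Y] : ∃ (I : ModuleCat.{0} A) (i : Y →ₗ[A] I),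
      UniserialModule A I ∧ Module.Injective A I ∧ Function.Injective i := by
  obtain ⟨E, i₀, _, hi₀⟩ := exists_injective_of_module (A := A) Y
  obtain ⟨C, hdisj, hess⟩ := exists_disjoint_forall_disjoint_map_mkQ (LinearMap.range i₀)
  let j : Y →ₗ[A] E ⧸ C := C.mkQ ∘ₗ i₀
  have hess' (D : Submodule A (E ⧸ C)) (hD : Disjoint (LinearMap.range j) D) : D = ⊥ :=
    hess D (by rwa [← LinearMap.range_comp])
  have hj : Function.Injective j := by
    rw [← LinearMap.ker_eq_bot, LinearMap.ker_comp, Submodule.ker_mkQ]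
    rw [eq_bot_iff, ← LinearMap.ker_eq_bot.2 hi₀]
    exact fun y hy => Submodule.disjoint_def.1 hdisj _ ⟨y, rfl⟩ hy
  have : UniserialModule A (E ⧸ C) := hN.uniserialModule_of_forall_disjoint fun D₁ D₂ hD => by
    rcases UniserialModule.le_total (D₁.comap j) (D₂.comap j) with hle | hle
    · exact .inl (hess' D₁ (Submodule.disjoint_def.2 (by
        rintro _ ⟨y, rfl⟩ hy; exact Submodule.disjoint_def.1 hD _ hy (hle hy))))
    · exact .inr (hess' D₂ (Submodule.disjoint_def.2 (by
        rintro _ ⟨y, rfl⟩ hy; exact Submodule.disjoint_def.1 hD _ (hle hy) hy)))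
  obtain ⟨φ, hφ⟩ := Module.Injective.extension_property A E Y (E ⧸ C) j hj i₀
  have hinj : Function.Injective (C.mkQ ∘ₗ φ) := by
    refine LinearMap.ker_eq_bot.1 (hess' _ (LinearMap.disjoint_ker.2 ?_))
    rintro _ ⟨y, rfl⟩ hy
    exact (congrArg C.mkQ (LinearMap.congr_fun hφ y)).symm.trans hy
  let e := LinearEquiv.ofBijective _ (IsArtinian.bijective_of_injective_endomorphism _ hinj)
  refine ⟨.of A (E ⧸ C), j, ‹_›, injective_of_comp_eq_id φ (e.symm.toLinearMap ∘ₗ C.mkQ) ?_, hj⟩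
  ext x
  exact e.symm_apply_apply _

theorem IsNakayama.exists_uniserial_projective (hN : IsNakayama A) (D : Type) [AddCommGroup D]
    [Module A D] [UniserialModule A D] : ∃ (P : ModuleCat.{0} A) (π : P →ₗ[A] D),
      UniserialModule A P ∧ Module.Projective A P ∧ Function.Surjective π := by
  obtain ⟨f, hf⟩ := UniserialModule.exists_surjective A D
  revert f
  refine hN.induction_on_finite (motive := fun M _ _ => [Module.Projective A M] →
    ∀ f : M →ₗ[A] D, Function.Surjective f → ∃ (P : ModuleCat.{0} A) (π : P →ₗ[A] D),
      UniserialModule A P ∧ Module.Projective A P ∧ Function.Surjective π) ?_ ?_ A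
  · intro M _ _ _ _ f hf
    exact ⟨.of A M, f, ‹_›, ‹_›, hf⟩
  · intro M _ _ N₁ N₂ hc ih₁ ih₂ _ f hf
    have : Module.Projective A N₁ := .of_split N₁.subtype (N₁.projectionOnto N₂ hc) (by ext; simp)
    have : Module.Projective A N₂ :=
      .of_split N₂.subtype (N₂.projectionOnto N₁ hc.symm) (by ext; simp)
    have hsup : N₁.map f ⊔ N₂.map f = ⊤ := by
      rw [← Submodule.map_sup, hc.sup_eq_top, Submodule.map_top, LinearMap.range_eq_top.2 hf]
    rcases UniserialModule.eq_top_or_eq_top_of_sup_eq_top hsup with h | h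
    · exact ih₁ (f ∘ₗ N₁.subtype) (by
        rw [← LinearMap.range_eq_top, LinearMap.range_comp, Submodule.range_subtype, h])
    · exact ih₂ (f ∘ₗ N₂.subtype) (by
        rw [← LinearMap.range_eq_top, LinearMap.range_comp, Submodule.range_subtype, h])

end Envelopes

section Lifting

variable {A : Type} [Ring A] [IsArtinianRing A] {I J M P Y : Type}
  [AddCommGroup I] [Module A I] [AddCommGroup J] [Module A J] [AddCommGroup M] [Module A M]
  [AddCommGroup P] [Module A P] [AddCommGroup Y] [Module A Y]

theorem IsNakayama.exists_extension_of_isCoatom (hN : IsNakayama A) [UniserialModule A Y]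
    {K : Submodule A P} (hK : IsCoatom K) (φ : K →ₗ[A] Y) (hφ : ¬ Function.Surjective φ) :
    ∃ ψ : P →ₗ[A] Y, ψ ∘ₗ K.subtype = φ := by
  obtain ⟨I, i, _, _, hi⟩ := hN.exists_uniserial_injective Y
  obtain ⟨g, hg⟩ :=
    Module.Injective.extension_property A I K P K.subtype K.injective_subtype (i ∘ₗ φ)
  have hmap : K.map g = (LinearMap.range φ).map i := by
    rw [← LinearMap.range_comp, ← hg, LinearMap.range_comp, Submodule.range_subtype]
  have hK_le : K ≤ (LinearMap.range i).comap g := by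
    rw [← Submodule.map_le_iff_le_comap, hmap]
    exact LinearMap.map_le_range
  have hrange : LinearMap.range g ≤ LinearMap.range i := by
    by_contra hnle
    have hK_eq : (LinearMap.range i).comap g = K :=
      (hK.le_iff.1 hK_le).resolve_left fun htop => hnle (LinearMap.range_le_iff_comap.2 htop)
    refine hφ (LinearMap.range_eq_top.1 (Submodule.map_injective_of_injective hi ?_))
    rw [← hmap, ← hK_eq, Submodule.map_top,
      Submodule.map_comap_eq_of_le ((UniserialModule.le_total _ _).resolve_left hnle)]
  obtain ⟨ψ, rfl⟩ := exists_comp_eq_of_range_le hi hrange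
  exact ⟨ψ, LinearMap.ext fun x => hi (LinearMap.congr_fun hg x)⟩

theorem IsNakayama.exists_lift_of_isAtom (hN : IsNakayama A) [UniserialModule A Y]
    {T : Submodule A I} (hT : IsAtom T) (φ : Y →ₗ[A] I ⧸ T) (hφ : ¬ Function.Injective φ) :
    ∃ ψ : Y →ₗ[A] I, T.mkQ ∘ₗ ψ = φ := by
  obtain ⟨Q, η, _, _, hη⟩ := hN.exists_uniserial_projective Y
  obtain ⟨α, hα⟩ := Module.projective_lifting_property T.mkQ (φ ∘ₗ η) T.mkQ_surjective
  have hcomap : T.comap α = (LinearMap.ker φ).comap η := by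
    rw [← LinearMap.ker_comp, ← hα, LinearMap.ker_comp, T.ker_mkQ]
  have hmap_le : (LinearMap.ker η).map α ≤ T := by
    rw [Submodule.map_le_iff_le_comap, hcomap]
    exact LinearMap.ker_le_comap η
  have hker : LinearMap.ker η ≤ LinearMap.ker α := by
    by_contra hnle
    have hmap_eq : (LinearMap.ker η).map α = T :=
      (hT.le_iff.1 hmap_le).resolve_left fun hbot => hnle ((LinearMap.le_ker_iff_map).2 hbot)
    refine hφ (LinearMap.ker_eq_bot.1 (Submodule.comap_injective_of_surjective hη ?_))
    rw [← hcomap, ← hmap_eq, Submodule.comap_bot,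
      Submodule.comap_map_eq_self ((UniserialModule.le_total _ _).resolve_left hnle)]
  obtain ⟨ψ, rfl⟩ := exists_comp_eq_of_ker_le hη hker
  exact ⟨ψ, LinearMap.ext <| hη.forall.2 fun x => LinearMap.congr_fun hα x⟩

theorem IsNakayama.injective_of_surjective_isCoatom (hN : IsNakayama A) [UniserialModule A P]
    [Module.Projective A P] [UniserialModule A M] {K : Submodule A P} (hK : IsCoatom K)
    (hK₀ : K ≠ ⊥) (c : M →ₗ[A] K) (hc : Function.Surjective c) (hc' : ¬ Function.Injective c) :
    Module.Injective A M := by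
  obtain ⟨I, j, _, _, hj⟩ := hN.exists_uniserial_injective M
  suffices hjs : Function.Surjective j by
    let e := LinearEquiv.ofBijective j ⟨hj, hjs⟩
    exact injective_of_comp_eq_id j e.symm (LinearMap.ext e.symm_apply_apply)
  by_contra hjs
  let N : Submodule A I := (LinearMap.ker c).map j
  obtain ⟨κ, -, hκ_inj, hκ_surj⟩ := exists_comp_eq_mkQ_comp hc hj
  obtain ⟨δ, hδ⟩ := hN.exists_extension_of_isCoatom hK κ (mt hκ_surj hjs)
  have : Nontrivial K := Submodule.nontrivial_iff_ne_bot.2 hK₀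
  have hδ_inj : Function.Injective δ :=
    UniserialModule.injective_of_comp K.subtype δ (hδ ▸ hκ_inj)
  obtain ⟨δ', hδ'⟩ := Module.projective_lifting_property N.mkQ δ N.mkQ_surjective
  have hdisj : Disjoint (LinearMap.range δ') N := by
    rw [← N.ker_mkQ, LinearMap.disjoint_ker]
    rintro _ ⟨p, rfl⟩ hp
    rw [← LinearMap.comp_apply, hδ', map_eq_zero_iff δ hδ_inj] at hp
    rw [hp, map_zero]
  rcases UniserialModule.le_total (LinearMap.range δ') N with hle | hle
  · have h₀ := LinearMap.range_eq_bot.1 (hdisj.eq_bot_of_le hle)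
    rw [← hδ', h₀, LinearMap.comp_zero] at hδ_inj
    exact hK₀ (le_bot_iff.1
      (le_top.trans (LinearMap.ker_zero.ge.trans (LinearMap.ker_eq_bot.2 hδ_inj).le)))
  · have hcomap : N.comap j = LinearMap.ker c := Submodule.comap_map_eq_of_injective hj _
    exact hc' (LinearMap.ker_eq_bot.1 (by
      rw [← hcomap, hdisj.symm.eq_bot_of_le hle, Submodule.comap_bot, LinearMap.ker_eq_bot.2 hj]))

theorem IsNakayama.projective_of_injective_isAtom (hN : IsNakayama A) [UniserialModule A I]
    [Module.Injective A I] [UniserialModule A J] {T : Submodule A I} (hT : IsAtom T) (hT' : T ≠ ⊤)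
    (d : I ⧸ T →ₗ[A] J) (hd : Function.Injective d) (hd' : ¬ Function.Surjective d) :
    Module.Projective A J := by
  obtain ⟨P, b, _, _, hb⟩ := hN.exists_uniserial_projective J
  suffices hbi : Function.Injective b from .of_equiv (LinearEquiv.ofBijective b ⟨hbi, hb⟩)
  by_contra hbi
  let Y : Submodule A P := (LinearMap.range d).comap b
  obtain ⟨δ, -, hδ_surj, hδ_inj⟩ := exists_comp_eq_comp_subtype hd hb
  obtain ⟨ζ, hζ⟩ := hN.exists_lift_of_isAtom hT δ (mt hδ_inj hbi)
  have : Nontrivial (I ⧸ T) := Submodule.Quotient.nontrivial_iff.2 hT'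
  have hζ_surj : Function.Surjective ζ :=
    UniserialModule.surjective_of_comp T.mkQ ζ (hζ ▸ hδ_surj)
  obtain ⟨ζ', hζ'⟩ := Module.Injective.extension_property A I Y P Y.subtype Y.injective_subtype ζ
  have hsup : Y ⊔ LinearMap.ker ζ' = ⊤ := by
    rw [← Submodule.comap_map_eq, ← Y.range_subtype, ← LinearMap.range_comp, hζ',
      LinearMap.range_eq_top.2 hζ_surj, Submodule.comap_top]
  rcases UniserialModule.eq_top_or_eq_top_of_sup_eq_top hsup with hY | hker
  · exact hd' (LinearMap.range_eq_top.1 (Submodule.comap_injective_of_surjective hb hY))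
  · rw [← hζ', LinearMap.ker_eq_top.1 hker, LinearMap.zero_comp, ← LinearMap.range_eq_top,
      LinearMap.range_zero] at hζ_surj
    exact hT' (eq_top_iff.2 (hζ_surj.ge.trans bot_le))

end Lifting

section JacobsonRadical

variable {A L : Type*} [Ring A] [AddCommGroup L] [Module A L]

instance isSemisimpleModule_quotient_jacobson_smul [IsArtinianRing A] :
    IsSemisimpleModule A (L ⧸ Ring.jacobson A • (⊤ : Submodule A L)) := by
  have h : Module.IsTorsionBySet A (L ⧸ Ring.jacobson A • (⊤ : Submodule A L))
      (Ring.jacobson A) := by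
    rw [Module.isTorsionBySet_quotient_iff]
    exact fun x r hr => Submodule.smul_mem_smul hr Submodule.mem_top
  let _ := h.module
  exact (h.semilinearMap.isSemisimpleModule_iff_of_bijective Function.bijective_id).2 inferInstance

theorem exists_fg_mem_smul_of_mem_smul_top {J : Ideal A} {x : L}
    (hx : x ∈ J • (⊤ : Submodule A L)) : ∃ Y : Submodule A L, Y.FG ∧ x ∈ J • Y := by
  induction hx using Submodule.smul_induction_on' with
  | smul r hr n _ => exact ⟨A ∙ n, Submodule.fg_span_singleton n,
      Submodule.smul_mem_smul hr (Submodule.mem_span_singleton_self n)⟩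
  | add x _ y _ ihx ihy =>
    obtain ⟨Y₁, h₁, hx⟩ := ihx
    obtain ⟨Y₂, h₂, hy⟩ := ihy
    exact ⟨Y₁ ⊔ Y₂, h₁.sup h₂, add_mem (Submodule.smul_mono le_rfl le_sup_left hx)
      (Submodule.smul_mono le_rfl le_sup_right hy)⟩

end JacobsonRadical

section AlmostSplit

variable {A : Type} [Ring A] [IsArtinianRing A]

theorem IsNakayama.exists_extension_of_range_le_jacobson_smul_of_finite (hN : IsNakayama A)
    {P : Type} [AddCommGroup P] [Module A P] {K : Submodule A P} (hK : IsCoatom K) (Y : Type)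
    [AddCommGroup Y] [Module A Y] [Module.Finite A Y]
    (φ : K →ₗ[A] Y) (hφ : LinearMap.range φ ≤ Ring.jacobson A • (⊤ : Submodule A Y)) :
    ∃ ψ : P →ₗ[A] Y, ψ ∘ₗ K.subtype = φ := by
  revert φ
  refine hN.induction_on_finite (motive := fun Y _ _ => ∀ φ : K →ₗ[A] Y,
    LinearMap.range φ ≤ Ring.jacobson A • (⊤ : Submodule A Y) →
      ∃ ψ : P →ₗ[A] Y, ψ ∘ₗ K.subtype = φ) ?_ ?_ Y
  · intro Y _ _ _ φ hφ
    cases subsingleton_or_nontrivial Y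
    · exact ⟨0, Subsingleton.elim _ _⟩
    · have hlt := hφ.trans_lt (Submodule.jacobson_smul_lt_top _)
      exact hN.exists_extension_of_isCoatom hK φ fun h => hlt.ne (LinearMap.range_eq_top.2 h)
  · intro Y _ _ N₁ N₂ hc ih₁ ih₂ φ hφ
    have range_le {N : Type} [AddCommGroup N] [Module A N] (p : Y →ₗ[A] N) :
        LinearMap.range (p ∘ₗ φ) ≤ Ring.jacobson A • (⊤ : Submodule A N) := by
      rw [LinearMap.range_comp]
      refine (Submodule.map_mono hφ).trans ?_
      rw [Submodule.map_smul'']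
      exact smul_mono_right _ le_top
    obtain ⟨ψ₁, h₁⟩ := ih₁ (N₁.projectionOnto N₂ hc ∘ₗ φ) (range_le _)
    obtain ⟨ψ₂, h₂⟩ := ih₂ (N₂.projectionOnto N₁ hc.symm ∘ₗ φ) (range_le _)
    refine ⟨N₁.subtype ∘ₗ ψ₁ + N₂.subtype ∘ₗ ψ₂, ?_⟩
    rw [LinearMap.add_comp, LinearMap.comp_assoc, LinearMap.comp_assoc, h₁, h₂]
    exact LinearMap.ext fun x => Submodule.projection_add_projection_eq_self hc _

theorem IsNakayama.exists_extension_of_range_le_jacobson_smul (hN : IsNakayama A) {P L : Type}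
    [AddCommGroup P] [Module A P] [UniserialModule A P] [AddCommGroup L] [Module A L]
    {K : Submodule A P} (hK : IsCoatom K)
    (φ : K →ₗ[A] L) (hφ : LinearMap.range φ ≤ Ring.jacobson A • (⊤ : Submodule A L)) :
    ∃ ψ : P →ₗ[A] L, ψ ∘ₗ K.subtype = φ := by
  obtain ⟨x, hx⟩ := UniserialModule.exists_span_singleton_eq_top A K
  obtain ⟨Y, hY, hxY⟩ := exists_fg_mem_smul_of_mem_smul_top (hφ ⟨x, rfl⟩)
  have hφY : LinearMap.range φ ≤ Ring.jacobson A • Y := by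
    rwa [LinearMap.range_eq_map, ← hx, Submodule.map_span, Set.image_singleton,
      Submodule.span_singleton_le_iff_mem]
  obtain ⟨φ', rfl⟩ := exists_comp_eq_of_range_le Y.injective_subtype (f := φ) (by
    rw [Y.range_subtype]; exact hφY.trans Submodule.smul_le_right)
  have hφ' : LinearMap.range φ' ≤ Ring.jacobson A • (⊤ : Submodule A Y) := by
    rw [← Submodule.map_le_map_iff_of_injective Y.injective_subtype, ← LinearMap.range_comp,
      Submodule.map_smul'', Submodule.map_top, Y.range_subtype]
    exact hφY
  have : Module.Finite A Y := Module.Finite.iff_fg.2 hY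
  obtain ⟨ψ, hψ⟩ := hN.exists_extension_of_range_le_jacobson_smul_of_finite hK Y φ' hφ'
  exact ⟨Y.subtype ∘ₗ ψ, by rw [LinearMap.comp_assoc, hψ]⟩

theorem IsNakayama.exists_comp_eq_or_exists_extension (hN : IsNakayama A) {P L T : Type}
    [AddCommGroup P] [Module A P] [UniserialModule A P] [AddCommGroup L] [Module A L]
    [AddCommGroup T] [Module A T] [IsSimpleModule A T] {K : Submodule A P} (hK : IsCoatom K)
    (k : K →ₗ[A] T) (φ : K →ₗ[A] L) :
    (∃ θ : L →ₗ[A] T, θ ∘ₗ φ = k) ∨ ∃ ψ : P →ₗ[A] L, ψ ∘ₗ K.subtype = φ := by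
  let R : Submodule A L := Ring.jacobson A • ⊤
  by_cases htop : LinearMap.ker (R.mkQ ∘ₗ φ) = ⊤
  · refine .inr (hN.exists_extension_of_range_le_jacobson_smul hK φ ?_)
    rwa [LinearMap.ker_comp, R.ker_mkQ, ← LinearMap.range_le_iff_comap] at htop
  · left
    have hle : LinearMap.ker (R.mkQ ∘ₗ φ) ≤ LinearMap.ker k := by
      rcases k.surjective_or_eq_zero with hk | rfl
      · refine (UniserialModule.le_total _ _).elim id fun hle => ?_
        exact (((LinearMap.isCoatom_ker_of_surjective hk).le_iff.1 hle).resolve_left htop).le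
      · exact le_top.trans LinearMap.ker_zero.ge
    obtain ⟨k', hk'⟩ := exists_comp_eq_of_ker_le
      (LinearMap.surjective_rangeRestrict (R.mkQ ∘ₗ φ)) (f := k)
      (by rwa [LinearMap.ker_rangeRestrict])
    obtain ⟨θ, hθ⟩ := IsSemisimpleModule.extension_property
      (LinearMap.range (R.mkQ ∘ₗ φ)).subtype (Submodule.subtype_injective _) k'
    exact ⟨θ ∘ₗ R.mkQ, by rw [← hk', ← hθ]; rfl⟩

end AlmostSplit

section Splitting

variable {A E P Q T U X : Type*} [Ring A] [AddCommGroup E] [Module A E] [AddCommGroup P]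
  [Module A P] [AddCommGroup Q] [Module A Q] [AddCommGroup T] [Module A T] [AddCommGroup U]
  [Module A U] [AddCommGroup X] [Module A X]

theorem exists_lift_of_exact {f : T →ₗ[A] E} {g : E →ₗ[A] U} (hf : Function.Injective f)
    (hfg : Function.Exact f g) {e : X →ₗ[A] E} (he : g ∘ₗ e = 0) :
    ∃ k : X →ₗ[A] T, f ∘ₗ k = e :=
  exists_comp_eq_of_range_le hf (by rwa [← hfg.linearMap_ker_eq, LinearMap.range_le_ker_iff])

theorem exists_desc_of_exact {f : T →ₗ[A] E} {g : E →ₗ[A] U} (hg : Function.Surjective g)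
    (hfg : Function.Exact f g) {e : E →ₗ[A] X} (he : e ∘ₗ f = 0) :
    ∃ k : U →ₗ[A] X, k ∘ₗ g = e :=
  exists_comp_eq_of_ker_le hg (by rwa [hfg.linearMap_ker_eq, LinearMap.range_le_ker_iff])

theorem exists_section_of_comp_subtype_eq {g : E →ₗ[A] U} {q : Q →ₗ[A] U}
    (hq : Function.Surjective q) {e d : Q →ₗ[A] E} (he : g ∘ₗ e = q) (hd : g ∘ₗ d = 0)
    (hde : d ∘ₗ (LinearMap.ker q).subtype = e ∘ₗ (LinearMap.ker q).subtype) :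
    ∃ s : U →ₗ[A] E, g ∘ₗ s = LinearMap.id := by
  obtain ⟨s, hs⟩ := exists_comp_eq_of_ker_le hq (f := e - d) fun x hx =>
    sub_eq_zero.2 (LinearMap.congr_fun hde ⟨x, hx⟩).symm
  refine ⟨s, (LinearMap.cancel_right hq).1 ?_⟩
  rw [LinearMap.comp_assoc, hs, LinearMap.comp_sub, he, hd, sub_zero, LinearMap.id_comp]

theorem exists_comp_eq_and_comp_eq {p : P →ₗ[A] X} {q : Q →ₗ[A] X}
    (hpq : LinearMap.range p ⊔ LinearMap.range q = ⊤) (a : P →ₗ[A] E) (b : Q →ₗ[A] E)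
    (hab : ∀ x y, p x = q y → a x = b y) :
    ∃ h : X →ₗ[A] E, h ∘ₗ p = a ∧ h ∘ₗ q = b := by
  have hsurj : Function.Surjective (p.coprod q) := by
    rw [← LinearMap.range_eq_top, LinearMap.range_coprod, hpq]
  obtain ⟨h, hh⟩ := exists_comp_eq_of_ker_le hsurj (f := a.coprod b) (by
    rintro ⟨x, y⟩ hxy
    rw [LinearMap.mem_ker, LinearMap.coprod_apply] at hxy ⊢
    rw [hab x (-y) (by rw [map_neg]; exact eq_neg_of_add_eq_zero_left hxy), map_neg,
      neg_add_cancel])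
  exact ⟨h, by rw [← p.coprod_inl q, ← LinearMap.comp_assoc, hh, LinearMap.coprod_inl],
    by rw [← p.coprod_inr q, ← LinearMap.comp_assoc, hh, LinearMap.coprod_inr]⟩

end Splitting

section SplittingHomological

variable {A E I P Q T U : Type} [Ring A] [AddCommGroup E] [Module A E] [AddCommGroup I]
  [Module A I] [AddCommGroup P] [Module A P] [AddCommGroup Q] [Module A Q] [AddCommGroup T]
  [Module A T] [AddCommGroup U] [Module A U]

theorem exists_section_of_projective_ker {f : T →ₗ[A] E} {g : E →ₗ[A] U}
    (hf : Function.Injective f) (hg : Function.Surjective g) (hfg : Function.Exact f g)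
    [Module.Projective A Q] {q : Q →ₗ[A] U} (hq : Function.Surjective q)
    [Module.Projective A (LinearMap.ker q)] [Module.Injective A I] {t : I →ₗ[A] T}
    (ht : Function.Surjective t) : ∃ s : U →ₗ[A] E, g ∘ₗ s = LinearMap.id := by
  obtain ⟨e, he⟩ := Module.projective_lifting_property g q hg
  obtain ⟨k, hk⟩ := exists_lift_of_exact hf hfg (e := e ∘ₗ (LinearMap.ker q).subtype) (by
    rw [← LinearMap.comp_assoc, he, LinearMap.comp_ker_subtype])
  obtain ⟨k', rfl⟩ := Module.projective_lifting_property t k ht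
  obtain ⟨κ, rfl⟩ := Module.Injective.extension_property A I _ _ (LinearMap.ker q).subtype
    (Submodule.injective_subtype _) k'
  refine exists_section_of_comp_subtype_eq hq (d := f ∘ₗ t ∘ₗ κ) he ?_ hk
  rw [← LinearMap.comp_assoc, hfg.linearMap_comp_eq_zero, LinearMap.zero_comp]

theorem exists_retraction_of_injective_quotient {f : T →ₗ[A] E} {g : E →ₗ[A] U}
    (hf : Function.Injective f) (hg : Function.Surjective g) (hfg : Function.Exact f g)
    [Module.Injective A I] {i : T →ₗ[A] I} (hi : Function.Injective i)
    [Module.Injective A (I ⧸ LinearMap.range i)] [Module.Projective A P] {u : U →ₗ[A] P}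
    (hu : Function.Injective u) : ∃ r : E →ₗ[A] T, r ∘ₗ f = LinearMap.id := by
  obtain ⟨e, he⟩ := Module.Injective.extension_property A I _ _ f hf i
  obtain ⟨k, hk⟩ := exists_desc_of_exact hg hfg (e := (LinearMap.range i).mkQ ∘ₗ e) (by
    rw [LinearMap.comp_assoc, he, LinearMap.range_mkQ_comp])
  obtain ⟨k', rfl⟩ := Module.Injective.extension_property A _ _ _ u hu k
  obtain ⟨κ, rfl⟩ := Module.projective_lifting_property _ k' (LinearMap.range i).mkQ_surjective
  obtain ⟨r, hr⟩ := exists_comp_eq_of_range_le hi (f := e - κ ∘ₗ u ∘ₗ g) (by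
    rw [← (LinearMap.range i).ker_mkQ, LinearMap.range_le_ker_iff, LinearMap.comp_sub, ← hk]
    exact sub_self _)
  refine ⟨r, (LinearMap.cancel_left hi).1 ?_⟩
  rw [← LinearMap.comp_assoc, hr, LinearMap.sub_comp, he, LinearMap.comp_assoc,
    LinearMap.comp_assoc, hfg.linearMap_comp_eq_zero, LinearMap.comp_zero, LinearMap.comp_zero,
    sub_zero, LinearMap.comp_id]

end SplittingHomological

section AlmostSplitSequences

variable {A : Type} [Ring A]

theorem indec_of_isSimpleModule (M : ModuleCat.{0} A) [IsSimpleModule A M] : Indec A M :=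
  ⟨IsSimpleModule.nontrivial A M, fun N₁ _ hc => (eq_bot_or_eq_top N₁).imp_right fun h =>
    hc.disjoint.eq_bot_of_ge (le_top.trans h.ge)⟩

theorem IsTauOf.exists_exact {T U : ModuleCat.{0} A} (h : IsTauOf A T U) :
    ∃ (E : ModuleCat.{0} A) (f : T →ₗ[A] E) (g : E →ₗ[A] U), Function.Injective f ∧
      Function.Surjective g ∧ Function.Exact f g ∧ ¬ ∃ s : U →ₗ[A] E, g ∘ₗ s = LinearMap.id := by
  obtain ⟨E, f, g, hf, hg, ⟨w, hfg⟩, hns, -⟩ := h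
  exact ⟨E, f.hom, g.hom, (ModuleCat.mono_iff_injective f).1 hf,
    (ModuleCat.epi_iff_surjective g).1 hg,
    (ShortComplex.ShortExact.moduleCat_exact_iff_function_exact _).1 hfg,
    fun ⟨s, hs⟩ => hns ⟨ModuleCat.ofHom s, ModuleCat.hom_ext hs⟩⟩

variable [IsArtinianRing A]

theorem IsNakayama.exists_lift_or_exists_section (hN : IsNakayama A) {E T U X : Type}
    [AddCommGroup E] [Module A E] [AddCommGroup T] [Module A T] [IsSimpleModule A T]
    [AddCommGroup U] [Module A U] [IsSimpleModule A U] [AddCommGroup X] [Module A X]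
    {f : T →ₗ[A] E} {g : E →ₗ[A] U} (hf : Function.Injective f) (hg : Function.Surjective g)
    (hfg : Function.Exact f g) (h : X →ₗ[A] U) :
    (∃ h' : X →ₗ[A] E, g ∘ₗ h' = h) ∨ ∃ s : U →ₗ[A] X, h ∘ₗ s = LinearMap.id := by
  rcases h.surjective_or_eq_zero with hh | rfl
  swap
  · exact .inl ⟨0, LinearMap.comp_zero g⟩
  obtain ⟨P, π, _, _, hπ⟩ := hN.exists_uniserial_projective U
  obtain ⟨e, he⟩ := Module.projective_lifting_property g π hg
  obtain ⟨p, hp⟩ := Module.projective_lifting_property h π hh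
  obtain ⟨k, hk⟩ := exists_lift_of_exact hf hfg (e := e ∘ₗ (LinearMap.ker π).subtype) (by
    rw [← LinearMap.comp_assoc, he, LinearMap.comp_ker_subtype])
  obtain ⟨φ, hφ⟩ := exists_lift_of_exact (LinearMap.ker h).injective_subtype
    h.exact_subtype_ker_map (e := p ∘ₗ (LinearMap.ker π).subtype) (by
      rw [← LinearMap.comp_assoc, hp, LinearMap.comp_ker_subtype])
  rcases hN.exists_comp_eq_or_exists_extension (LinearMap.isCoatom_ker_of_surjective hπ) k φ with
    ⟨θ, rfl⟩ | ⟨ψ, rfl⟩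
  · left
    have hsup : LinearMap.range (LinearMap.ker h).subtype ⊔ LinearMap.range p = ⊤ := by
      rw [Submodule.range_subtype, sup_comm, ← Submodule.comap_map_eq, ← LinearMap.range_comp, hp,
        LinearMap.range_eq_top.2 hπ, Submodule.comap_top]
    obtain ⟨h', hker, hp'⟩ := exists_comp_eq_and_comp_eq hsup (f ∘ₗ θ) e fun x y hxy => by
      have hy : π y = 0 := by rw [← hp, LinearMap.comp_apply, ← hxy]; exact x.2
      have hx : x = φ ⟨y, hy⟩ :=
        Subtype.ext (hxy.trans (LinearMap.congr_fun hφ ⟨y, hy⟩).symm)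
      rw [hx]
      exact LinearMap.congr_fun hk ⟨y, hy⟩
    obtain ⟨c, hc⟩ := exists_desc_of_exact hh h.exact_subtype_ker_map (e := g ∘ₗ h') (by
      rw [LinearMap.comp_assoc, hker, ← LinearMap.comp_assoc, hfg.linearMap_comp_eq_zero,
        LinearMap.zero_comp])
    have hc' : c = LinearMap.id := (LinearMap.cancel_right hπ).1 (by
      rw [← hp, ← LinearMap.comp_assoc, hc, LinearMap.comp_assoc, hp', he, hp, LinearMap.id_comp])
    exact ⟨h', by rw [← hc, hc', LinearMap.id_comp]⟩
  · right
    refine exists_section_of_comp_subtype_eq hπ (d := (LinearMap.ker h).subtype ∘ₗ ψ) hp ?_ hφ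
    rw [← LinearMap.comp_assoc, LinearMap.comp_ker_subtype, LinearMap.zero_comp]

theorem IsNakayama.isTauOf (hN : IsNakayama A) {T E U : ModuleCat.{0} A} [IsSimpleModule A T]
    [IsSimpleModule A U] [UniserialModule A E] {f : T →ₗ[A] E} {g : E →ₗ[A] U}
    (hf : Function.Injective f) (hg : Function.Surjective g) (hfg : Function.Exact f g) :
    IsTauOf A T U := by
  have := IsSimpleModule.nontrivial A T
  have := IsSimpleModule.nontrivial A U
  refine ⟨E, ModuleCat.ofHom f, ModuleCat.ofHom g, (ModuleCat.mono_iff_injective _).2 hf,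
    (ModuleCat.epi_iff_surjective _).2 hg,
    ⟨ModuleCat.hom_ext hfg.linearMap_comp_eq_zero,
      (ShortComplex.ShortExact.moduleCat_exact_iff_function_exact _).2 hfg⟩,
    ?_, indec_of_isSimpleModule T, indec_of_isSimpleModule U, fun X h hns => ?_⟩
  · rintro ⟨s, hs⟩
    have hgs : g ∘ₗ s.hom = LinearMap.id := congrArg ModuleCat.Hom.hom hs
    have hs_surj : Function.Surjective s.hom := UniserialModule.surjective_of_comp g s.hom
      (by rw [hgs]; exact Function.surjective_id)
    obtain ⟨x, hx⟩ := exists_ne (0 : T)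
    obtain ⟨u, hu⟩ := hs_surj (f x)
    have hu₀ : u = 0 := by
      rw [← LinearMap.id_apply (R := A) u, ← hgs, LinearMap.comp_apply, hu,
        hfg.apply_apply_eq_zero]
    exact hx ((map_eq_zero_iff f hf).1 (by rw [← hu, hu₀, map_zero]))
  · obtain ⟨h', hh'⟩ | ⟨s, hs⟩ := hN.exists_lift_or_exists_section hf hg hfg h.hom
    · exact ⟨ModuleCat.ofHom h', ModuleCat.hom_ext hh'⟩
    · exact absurd ⟨ModuleCat.ofHom s, ModuleCat.hom_ext hs⟩ hns

theorem IsNakayama.isTauOf_of_surjective_ker (hN : IsNakayama A) {P T U : ModuleCat.{0} A}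
    [UniserialModule A P] [IsSimpleModule A T] [IsSimpleModule A U] {π : P →ₗ[A] U}
    (hπ : Function.Surjective π) {t : LinearMap.ker π →ₗ[A] T} (ht : Function.Surjective t) :
    IsTauOf A T U := by
  let N : Submodule A P := (LinearMap.ker t).map (LinearMap.ker π).subtype
  obtain ⟨f, hf, hf_inj, -⟩ := exists_comp_eq_mkQ_comp ht (LinearMap.ker π).injective_subtype
  have hN_le : N ≤ LinearMap.ker π := Submodule.map_subtype_le _ _
  have hg : Function.Surjective (N.liftQ π hN_le) :=
    .of_comp (g := N.mkQ) (by rwa [← LinearMap.coe_comp, N.liftQ_mkQ])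
  refine hN.isTauOf (E := .of A (P ⧸ N)) hf_inj hg (LinearMap.exact_iff.2 ?_)
  rw [Submodule.ker_liftQ, ← LinearMap.range_comp_of_range_eq_top f (LinearMap.range_eq_top.2 ht),
    hf, LinearMap.range_comp, Submodule.range_subtype]

theorem IsNakayama.isTauOf_of_injective_quotient (hN : IsNakayama A) {I T U : ModuleCat.{0} A}
    [UniserialModule A I] [IsSimpleModule A T] [IsSimpleModule A U] {i : T →ₗ[A] I}
    (hi : Function.Injective i) {u : U →ₗ[A] I ⧸ LinearMap.range i} (hu : Function.Injective u) :
    IsTauOf A T U := by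
  let E : Submodule A I := (LinearMap.range u).comap (LinearMap.range i).mkQ
  obtain ⟨f, hf⟩ := exists_comp_eq_of_range_le E.injective_subtype (f := i) (by
    rw [E.range_subtype]; exact Submodule.le_comap_mkQ _ _)
  have hf_inj : Function.Injective f :=
    .of_comp (f := E.subtype) (by rwa [← LinearMap.coe_comp, hf])
  obtain ⟨g, hg, hg_surj, -⟩ := exists_comp_eq_comp_subtype hu (LinearMap.range i).mkQ_surjective
  refine hN.isTauOf (E := .of A E) hf_inj hg_surj (LinearMap.exact_iff.2 ?_)
  have hf_range : (LinearMap.range f).map E.subtype = LinearMap.range i := by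
    rw [← LinearMap.range_comp, hf]
  rw [← LinearMap.ker_comp_of_ker_eq_bot g (LinearMap.ker_eq_bot.2 hu), hg, LinearMap.ker_comp,
    Submodule.ker_mkQ]
  exact (congrArg (Submodule.comap E.subtype) hf_range.symm).trans
    (Submodule.comap_map_eq_of_injective E.injective_subtype _)

end AlmostSplitSequences

section Dimensions

variable {A : Type} [Ring A]

theorem two_le_projDim_iff {M : ModuleCat.{0} A} : 2 ≤ projDim A M ↔
    ∀ (Q : ModuleCat.{0} A) (q : Q →ₗ[A] M), Module.Projective A Q → Function.Surjective q →
      ¬ Module.Projective A (LinearMap.ker q) := by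
  refine ⟨fun h Q q hQ hq hker => ?_, fun h => le_sInf ?_⟩
  · have hle : ProjDimLE A 1 M := .succ 0 M Q (ModuleCat.ofHom q)
      ((IsProjective.iff_projective _).1 hQ) ((ModuleCat.epi_iff_surjective _).2 hq)
      (.zero _ (Projective.of_iso (ModuleCat.kernelIsoKer (ModuleCat.ofHom q)).symm
        ((IsProjective.iff_projective _).1 hker)))
    exact absurd (h.trans (sInf_le ⟨1, rfl, hle⟩)) (by norm_num)
  · rintro _ ⟨n, rfl, hn⟩
    rcases hn with ⟨_, hM⟩ | ⟨_, _, Q, q, hQ, hq, ⟨_, hker⟩ | _⟩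
    · refine absurd ?_ (h M LinearMap.id ((IsProjective.iff_projective _).2 hM)
        Function.surjective_id)
      rw [LinearMap.ker_id]
      infer_instance
    · exact absurd ((IsProjective.iff_projective _).2
        (Projective.of_iso (ModuleCat.kernelIsoKer q) hker)) (h Q q.hom
          ((IsProjective.iff_projective _).2 hQ) ((ModuleCat.epi_iff_surjective q).1 hq))
    · exact_mod_cast Nat.le_add_left 2 _

theorem two_le_injDim_iff {M : ModuleCat.{0} A} : 2 ≤ injDim A M ↔
    ∀ (I : ModuleCat.{0} A) (i : M →ₗ[A] I), Module.Injective A I → Function.Injective i →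
      ¬ Module.Injective A (I ⧸ LinearMap.range i) := by
  refine ⟨fun h I i hI hi hquot => ?_, fun h => le_sInf ?_⟩
  · have hle : InjDimLE A 1 M := .succ 0 M I (ModuleCat.ofHom i)
      ((Module.injective_iff_injective_object _ _).1 hI) ((ModuleCat.mono_iff_injective _).2 hi)
      (.zero _ (Injective.of_iso (ModuleCat.cokernelIsoRangeQuotient (ModuleCat.ofHom i)).symm
        ((Module.injective_iff_injective_object _ _).1 hquot)))
    exact absurd (h.trans (sInf_le ⟨1, rfl, hle⟩)) (by norm_num)
  · rintro _ ⟨n, rfl, hn⟩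
    rcases hn with ⟨_, hM⟩ | ⟨_, _, I, i, hI, hi, ⟨_, hquot⟩ | _⟩
    · refine absurd ?_ (h M LinearMap.id ((Module.injective_iff_injective_object _ _).2 hM)
        Function.injective_id)
      have := Submodule.Quotient.subsingleton_iff.2 (LinearMap.range_id (R := A) (M := M))
      exact injective_of_subsingleton _
    · exact absurd ((Module.injective_iff_injective_object _ _).2
        (Injective.of_iso (ModuleCat.cokernelIsoRangeQuotient i) hquot)) (h I i.hom
          ((Module.injective_iff_injective_object _ _).2 hI)
          ((ModuleCat.mono_iff_injective i).1 hi))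
    · exact_mod_cast Nat.le_add_left 2 _

end Dimensions

section Covers

variable {A : Type} [Ring A] {M S : ModuleCat.{0} A} [UniserialModule A M]

theorem isSimpleTopOf_of_surjective [IsSimpleModule A S] {f : M →ₗ[A] S}
    (hf : Function.Surjective f) : IsSimpleTopOf A M S :=
  have := IsSimpleModule.nontrivial A S
  ⟨‹_›, ModuleCat.ofHom f, (ModuleCat.epi_iff_surjective _).2 hf, fun _ g hg =>
    (ModuleCat.epi_iff_surjective g).2 <|
      UniserialModule.surjective_of_comp f g.hom ((ModuleCat.epi_iff_surjective _).1 hg)⟩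

theorem isSimpleSocOf_of_injective [IsSimpleModule A S] {f : S →ₗ[A] M}
    (hf : Function.Injective f) : IsSimpleSocOf A M S :=
  have := IsSimpleModule.nontrivial A S
  ⟨‹_›, ModuleCat.ofHom f, (ModuleCat.mono_iff_injective _).2 hf, fun _ g hg =>
    (ModuleCat.mono_iff_injective g).2 <|
      UniserialModule.injective_of_comp f g.hom ((ModuleCat.mono_iff_injective _).1 hg)⟩

theorem isProjCoverOf_of_surjective [Nontrivial S] [Module.Projective A M] {f : M →ₗ[A] S}
    (hf : Function.Surjective f) : IsProjCoverOf A S M :=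
  ⟨ModuleCat.ofHom f, (IsProjective.iff_projective _).1 ‹_›,
    (ModuleCat.epi_iff_surjective _).2 hf, fun _ g hg => (ModuleCat.epi_iff_surjective g).2 <|
      UniserialModule.surjective_of_comp f g.hom ((ModuleCat.epi_iff_surjective _).1 hg)⟩

theorem isInjEnvOf_of_injective [Nontrivial S] [Module.Injective A M] {f : S →ₗ[A] M}
    (hf : Function.Injective f) : IsInjEnvOf A S M :=
  ⟨ModuleCat.ofHom f, (Module.injective_iff_injective_object _ _).1 ‹_›,
    (ModuleCat.mono_iff_injective _).2 hf, fun _ g hg => (ModuleCat.mono_iff_injective g).2 <|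
      UniserialModule.injective_of_comp f g.hom ((ModuleCat.mono_iff_injective _).1 hg)⟩

end Covers

section PsiGamma

variable {A : Type} [Ring A]

theorem exists_isSimpleModule_injective (M : Type) [AddCommGroup M] [Module A M]
    [IsArtinian A M] [Nontrivial M] : ∃ (S : ModuleCat.{0} A) (i : S →ₗ[A] M),
      IsSimpleModule A S ∧ Function.Injective i := by
  obtain ⟨S, hS⟩ := IsAtomic.exists_atom (Submodule A M)
  exact ⟨.of A S, S.subtype, isSimpleModule_iff_isAtom.2 hS, S.injective_subtype⟩

theorem exists_isSimpleModule_surjective (M : Type) [AddCommGroup M] [Module A M]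
    [Module.Finite A M] [Nontrivial M] : ∃ (S : ModuleCat.{0} A) (t : M →ₗ[A] S),
      IsSimpleModule A S ∧ Function.Surjective t := by
  obtain ⟨K, hK⟩ := IsCoatomic.exists_coatom (Submodule A M)
  exact ⟨.of A (M ⧸ K), K.mkQ, isSimpleModule_iff_isCoatom.2 hK, K.mkQ_surjective⟩

theorem IsPsiOf.two_le_projDim {S U : ModuleCat.{0} A} (h : IsPsiOf A S U) :
    2 ≤ projDim A U := by
  obtain ⟨I, ⟨-, hI, -⟩, T, ⟨-, t, ht, -⟩, hTU⟩ := h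
  obtain ⟨E, f, g, hf, hg, hfg, hns⟩ := hTU.exists_exact
  have : Module.Injective A I := (Module.injective_iff_injective_object _ _).2 hI
  exact two_le_projDim_iff.2 fun Q q _ hq _ => hns
    (exists_section_of_projective_ker hf hg hfg hq ((ModuleCat.epi_iff_surjective t).1 ht))

theorem IsGammaOf.two_le_injDim {S T : ModuleCat.{0} A} (h : IsGammaOf A S T) :
    2 ≤ injDim A T := by
  obtain ⟨P, ⟨-, hP, -⟩, U, ⟨-, u, hu, -⟩, hTU⟩ := h
  obtain ⟨E, f, g, hf, hg, hfg, hns⟩ := hTU.exists_exact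
  have : Module.Projective A P := (IsProjective.iff_projective _).2 hP
  exact two_le_injDim_iff.2 fun I i _ hi _ => hns (((hfg.split_tfae hf hg).out 0 1).2
    (exists_retraction_of_injective_quotient hf hg hfg hi ((ModuleCat.mono_iff_injective u).1 hu)))

variable [IsArtinianRing A]

theorem IsNakayama.exists_isPsiOf (hN : IsNakayama A) {U : ModuleCat.{0} A} [IsSimpleModule A U]
    (hU : 2 ≤ projDim A U) : ∃ S : ModuleCat.{0} A, IsSimpleModule A S ∧ IsPsiOf A S U := by
  obtain ⟨P, π, _, hP, hπ⟩ := hN.exists_uniserial_projective U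
  have hker : ¬ Module.Projective A (LinearMap.ker π) := two_le_projDim_iff.1 hU P π hP hπ
  have hker_ne : LinearMap.ker π ≠ ⊥ := fun h => hker (by rw [h]; infer_instance)
  have : Nontrivial (LinearMap.ker π) := Submodule.nontrivial_iff_ne_bot.2 hker_ne
  obtain ⟨Q, c, _, _, hc⟩ := hN.exists_uniserial_projective (LinearMap.ker π)
  have hc_inj : ¬ Function.Injective c := fun h =>
    hker (.of_equiv (LinearEquiv.ofBijective c ⟨h, hc⟩))
  have : Module.Injective A Q := hN.injective_of_surjective_isCoatom
    (LinearMap.isCoatom_ker_of_surjective hπ) hker_ne c hc hc_inj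
  have : Nontrivial Q := hc.nontrivial
  obtain ⟨S, i, hS, hi⟩ := exists_isSimpleModule_injective (A := A) Q
  obtain ⟨T, t, _, ht⟩ := exists_isSimpleModule_surjective (A := A) (LinearMap.ker π)
  have := IsSimpleModule.nontrivial A S
  exact ⟨S, hS, Q, isInjEnvOf_of_injective hi, T,
    isSimpleTopOf_of_surjective (f := t ∘ₗ c) (ht.comp hc), hN.isTauOf_of_surjective_ker hπ ht⟩

theorem IsNakayama.exists_isGammaOf (hN : IsNakayama A) {T : ModuleCat.{0} A} [IsSimpleModule A T]
    (hT : 2 ≤ injDim A T) : ∃ S : ModuleCat.{0} A, IsSimpleModule A S ∧ IsGammaOf A S T := by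
  obtain ⟨I, i, _, hI, hi⟩ := hN.exists_uniserial_injective T
  have hquot : ¬ Module.Injective A (I ⧸ LinearMap.range i) := two_le_injDim_iff.1 hT I i hI hi
  have hrange_ne : LinearMap.range i ≠ ⊤ := fun h =>
    have := Submodule.Quotient.subsingleton_iff.2 h
    hquot (injective_of_subsingleton _)
  have hrange : IsAtom (LinearMap.range i) := isSimpleModule_iff_isAtom.1
    (.congr (LinearEquiv.ofInjective i hi).symm)
  have : Nontrivial (I ⧸ LinearMap.range i) := Submodule.Quotient.nontrivial_iff.2 hrange_ne
  obtain ⟨J, d, _, _, hd⟩ := hN.exists_uniserial_injective (I ⧸ LinearMap.range i)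
  have hd_surj : ¬ Function.Surjective d := fun h => hquot (by
    let e := LinearEquiv.ofBijective d ⟨hd, h⟩
    exact injective_of_comp_eq_id d e.symm (LinearMap.ext e.symm_apply_apply))
  have : Module.Projective A J := hN.projective_of_injective_isAtom hrange hrange_ne d hd hd_surj
  have : Nontrivial J := hd.nontrivial
  obtain ⟨S, t, hS, ht⟩ := exists_isSimpleModule_surjective (A := A) J
  obtain ⟨U, u, _, hu⟩ := exists_isSimpleModule_injective (A := A) (I ⧸ LinearMap.range i)
  have := IsSimpleModule.nontrivial A S
  exact ⟨S, hS, J, isProjCoverOf_of_surjective ht, U,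
    isSimpleSocOf_of_injective (f := d ∘ₗ u) (hd.comp hu), hN.isTauOf_of_injective_quotient hi hu⟩

end PsiGamma

end ArtinAlg

open ArtinAlg in
theorem statement_6_general (A : Type) [Ring A] [IsArtinianRing A] (hNak : IsNakayama A) :
    (∀ U : ModuleCat.{0} A, IsSimpleModule A U →
      ((∃ S : ModuleCat.{0} A, IsSimpleModule A S ∧ IsPsiOf A S U) ↔ 2 ≤ projDim A U)) ∧
    (∀ T : ModuleCat.{0} A, IsSimpleModule A T →
      ((∃ S : ModuleCat.{0} A, IsSimpleModule A S ∧ IsGammaOf A S T) ↔ 2 ≤ injDim A T)) :=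
  ⟨fun _ _ => ⟨fun ⟨_, _, h⟩ => h.two_le_projDim, hNak.exists_isPsiOf⟩,
    fun _ _ => ⟨fun ⟨_, _, h⟩ => h.two_le_injDim, hNak.exists_isGammaOf⟩⟩

open ArtinAlg in
/-- Let `A` be a Nakayama algebra. A simple module `U` lies in the image
of `ψ` iff `pd U ≥ 2`, and a simple module `T` lies in the image of `γ` iff `id T ≥ 2`. -/
theorem statement_6 (R : Type) [CommRing R] [IsArtinianRing R]
    (A : Type) [Ring A] [Algebra R A] [Module.Finite R A]
    (hNak : IsNakayama A) :
    (∀ U : ModuleCat.{0} A, IsSimpleModule A ↥U →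
      ((∃ S : ModuleCat.{0} A, IsSimpleModule A ↥S ∧ IsPsiOf A S U) ↔
        (2 : ℕ∞) ≤ projDim A U)) ∧
    (∀ T : ModuleCat.{0} A, IsSimpleModule A ↥T →
      ((∃ S : ModuleCat.{0} A, IsSimpleModule A ↥S ∧ IsGammaOf A S T) ↔
        (2 : ℕ∞) ≤ injDim A T)) := by
  have : IsArtinianRing A := IsArtinianRing.of_finite R A
  exact statement_6_general A hNak
end
end
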